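/- arXiv:2408.00514 — 14 statements merged into one kernel-verified Lean document; each statement's English description precedes it below -/
import Mathlib

section
/- Let E be a cartesian closed category with pullbacks, let Z be an object of E, and let f : W → X be a morphism. If f is stably orthogonal to Z (i.e., every pullback of f along any morphism of E is orthogonal to Z), then f is internally orthogonal to Z (i.e., the induced map Z^f : Z^X → Z^W is an isomorphism). -/
open CategoryTheory Category Limits MonoidalCategory

universe u v

/-- In a cartesian closed category with pullbacks, if `f : W ⟶ X` is stably
orthogonal to `Z` (every pullback of `f` along any morphism is orthogonal to `Z`), then `f`
is internally orthogonal to `Z`, i.e. `Z^f : Z^X ⟶ Z^W` is an isomorphism. -/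
theorem stablyOrthogonal_implies_internallyOrthogonal
    {E : Type u} [Category.{v} E] [CartesianMonoidalCategory E] [MonoidalClosed E]
    [HasPullbacks E] (Z : E) {W X : E} (f : W ⟶ X)
    (hstable : ∀ {V Y : E} (f' : V ⟶ Y) (a : V ⟶ W) (b : Y ⟶ X),
      IsPullback a f' f b → ∀ g : V ⟶ Z, ∃! g' : Y ⟶ Z, f' ≫ g' = g) :
    IsIso ((MonoidalClosed.pre f).app Z) := by
  have key : ∀ (A : E) (g : W ⊗ A ⟶ Z), ∃! g' : X ⊗ A ⟶ Z, f ▷ A ≫ g' = g := by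
    intro A g
    refine hstable (f ▷ A) (SemiCartesianMonoidalCategory.fst W A)
      (SemiCartesianMonoidalCategory.fst X A) ?_ g
    refine ⟨⟨by simp⟩, ⟨PullbackCone.IsLimit.mk _
      (fun s => CartesianMonoidalCategory.lift s.fst
        (s.snd ≫ SemiCartesianMonoidalCategory.snd X A)) ?_ ?_ ?_⟩⟩
    · intro s
      simp
    · intro s
      have := s.condition
      apply CartesianMonoidalCategory.hom_ext <;> simp [this]
    · intro s m h1 h2
      apply CartesianMonoidalCategory.hom_ext
      · simpa using h1
      · simp [← h2]
  obtain ⟨g', hg', -⟩ := key _ ((ihom.ev W).app Z)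
  have h1 : MonoidalClosed.curry g' ≫ (MonoidalClosed.pre f).app Z = 𝟙 _ := by
    rw [MonoidalClosed.curry_pre_app, hg', ← MonoidalClosed.uncurry_id_eq_ev,
      MonoidalClosed.curry_uncurry]
  refine ⟨MonoidalClosed.curry g', ?_, h1⟩
  apply MonoidalClosed.uncurry_injective
  refine (key _ (f ▷ _ ≫ MonoidalClosed.uncurry (𝟙 _))).unique ?_ rfl
  rw [← MonoidalClosed.uncurry_pre_app, ← MonoidalClosed.uncurry_pre_app, assoc, h1, comp_id,
    id_comp]
end

section
/- Let E be a cartesian closed category with finite products, let Z be an object of E, and let f : W → X be a morphism. Then f is internally orthogonal to Z if and only if, for every object Y of E, the morphism f × id_Y : W × Y → X × Y is orthogonal to Z. -/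
open CategoryTheory Category Limits MonoidalCategory

universe u v

/-- In a cartesian closed category with finite products, a morphism `f : W ⟶ X`
is internally orthogonal to `Z` (i.e. `Z^f : Z^X ⟶ Z^W` is an isomorphism) if and only if,
for every object `Y`, the morphism `f × id_Y : W × Y ⟶ X × Y` is orthogonal to `Z`. -/
theorem internallyOrthogonal_iff_prod_orthogonal
    {E : Type u} [Category.{v} E] [CartesianMonoidalCategory E] [MonoidalClosed E]
    (Z : E) {W X : E} (f : W ⟶ X) :
    IsIso ((MonoidalClosed.pre f).app Z) ↔
      ∀ (Y : E) (g : W ⊗ Y ⟶ Z), ∃! g' : X ⊗ Y ⟶ Z, (f ▷ Y) ≫ g' = g := by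
  constructor
  · intro h Y g
    refine ⟨MonoidalClosed.uncurry (MonoidalClosed.curry g ≫ inv ((MonoidalClosed.pre f).app Z)),
      ?_, ?_⟩
    · apply MonoidalClosed.curry_injective
      change MonoidalClosed.curry (f ▷ Y ≫ _) = _
      rw [← MonoidalClosed.curry_pre_app, MonoidalClosed.curry_uncurry]
      simp
    · intro k hk
      change f ▷ Y ≫ k = g at hk
      apply MonoidalClosed.curry_injective
      rw [MonoidalClosed.curry_uncurry, ← hk, ← MonoidalClosed.curry_pre_app]
      simp
  · intro h
    have key : ∀ (Y : E) (a : Y ⟶ (ihom W).obj Z),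
        ∃! b : Y ⟶ (ihom X).obj Z, b ≫ (MonoidalClosed.pre f).app Z = a := by
      intro Y a
      obtain ⟨k, hk, hu⟩ := h Y (MonoidalClosed.uncurry a)
      change f ▷ Y ≫ k = _ at hk
      refine ⟨MonoidalClosed.curry k, ?_, ?_⟩
      · change MonoidalClosed.curry k ≫ _ = a
        rw [MonoidalClosed.curry_pre_app, hk, MonoidalClosed.curry_uncurry]
      · intro b hb
        change b ≫ _ = a at hb
        rw [← hu (MonoidalClosed.uncurry b), MonoidalClosed.curry_uncurry]
        change f ▷ Y ≫ _ = _
        apply MonoidalClosed.curry_injective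
        rw [← MonoidalClosed.curry_pre_app, MonoidalClosed.curry_uncurry,
          MonoidalClosed.curry_uncurry, hb]
    obtain ⟨s, hs, -⟩ := key _ (𝟙 _)
    change s ≫ _ = _ at hs
    refine ⟨s, ?_, hs⟩
    exact (key _ ((MonoidalClosed.pre f).app Z)).unique (by rw [assoc, hs, comp_id]) (id_comp _)
end

section
/- Let E be an elementary topos with subobject classifier Ω. A morphism f : W → X in E is internally orthogonal to Ω (i.e., Ω^f : Ω^X → Ω^W is an isomorphism) if and only if f is an isomorphism. Equivalently, the functor Ω^(−) : E^op → E reflects isomorphisms. -/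
open CategoryTheory Category Limits MonoidalCategory

universe u v

/-- A subobject classifier for a category with a (chosen) terminal object: an object `Ω`
together with `truth : 1 ⟶ Ω` such that every monomorphism is the pullback of `truth`
along a unique classifying map. -/
structure Classifier (E : Type u) [Category.{v} E] [CartesianMonoidalCategory E] where
  Ω : E
  truth : 𝟙_ E ⟶ Ω
  classifies : ∀ {U X : E} (m : U ⟶ X), Mono m →
    ∃! χ : X ⟶ Ω, IsPullback (CartesianMonoidalCategory.toUnit U) m truth χ

/-- In an elementary topos `E` with subobject classifier `Ω`, a morphism
`f : W ⟶ X` is internally orthogonal to `Ω` (i.e. `Ω^f : Ω^X ⟶ Ω^W` is an isomorphism)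
if and only if `f` is an isomorphism; equivalently, `Ω^(−) : Eᵒᵖ ⥤ E` reflects isos. -/
theorem internallyOrthogonal_classifier_iff_isIso
    {E : Type u} [Category.{v} E] [HasFiniteLimits E] [CartesianMonoidalCategory E]
    [MonoidalClosed E] (c : _root_.Classifier E) {W X : E} (f : W ⟶ X) :
    IsIso ((MonoidalClosed.pre f).app c.Ω) ↔ IsIso f := by
  constructor
  · intro h
    have key : ∀ {T : E} (g : X ⊗ T ⟶ c.Ω),
        MonoidalClosed.curry g ≫ (MonoidalClosed.pre f).app c.Ω =
          MonoidalClosed.curry (f ▷ T ≫ g) := by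
      intro T g
      exact MonoidalClosed.curry_pre_app f g
    have surj : ∀ {T : E} (k : W ⊗ T ⟶ c.Ω), ∃ g : X ⊗ T ⟶ c.Ω, f ▷ T ≫ g = k := by
      intro T k
      refine ⟨MonoidalClosed.uncurry
        (MonoidalClosed.curry k ≫ inv ((MonoidalClosed.pre f).app c.Ω)), ?_⟩
      apply MonoidalClosed.curry_injective
      rw [← key]
      simp
    have inj : ∀ {T : E} (g g' : X ⊗ T ⟶ c.Ω), f ▷ T ≫ g = f ▷ T ≫ g' → g = g' := by
      intro T g g' hg
      apply MonoidalClosed.curry_injective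
      rw [← cancel_mono ((MonoidalClosed.pre f).app c.Ω), key, key, hg]
    have hmono : Mono f := by
      constructor
      intro T a b hab
      have hm : Mono (CartesianMonoidalCategory.lift a (𝟙 T)) := by
        constructor
        intro Z p q hpq
        simpa using hpq =≫ CartesianMonoidalCategory.snd W T
      obtain ⟨χ, hχ, -⟩ := c.classifies _ hm
      obtain ⟨ψ, hψ⟩ := surj χ
      have e : CartesianMonoidalCategory.lift b (𝟙 T) ≫ χ =
          CartesianMonoidalCategory.lift a (𝟙 T) ≫ χ := by
        rw [← hψ]
        simp [hab]
      have w : CartesianMonoidalCategory.toUnit T ≫ c.truth =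
          CartesianMonoidalCategory.lift b (𝟙 T) ≫ χ := by rw [e, hχ.w]
      have hs := hχ.lift_snd _ _ w
      have h1 := hs =≫ CartesianMonoidalCategory.snd W T
      have h2 := hs =≫ CartesianMonoidalCategory.fst W T
      simp only [assoc, CartesianMonoidalCategory.lift_snd, comp_id] at h1
      simp only [assoc, CartesianMonoidalCategory.lift_fst, h1, id_comp] at h2
      exact h2
    obtain ⟨χ, hχ, -⟩ := c.classifies f hmono
    have e : CartesianMonoidalCategory.toUnit X ≫ c.truth = χ := by
      have := inj ((ρ_ X).hom ≫ CartesianMonoidalCategory.toUnit X ≫ c.truth)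
        ((ρ_ X).hom ≫ χ) (by
          rw [rightUnitor_naturality_assoc, rightUnitor_naturality_assoc, ← hχ.w,
            ← assoc f, CartesianMonoidalCategory.comp_toUnit])
      exact (cancel_epi _).1 this
    have w : CartesianMonoidalCategory.toUnit X ≫ c.truth = 𝟙 X ≫ χ := by rw [e, id_comp]
    have hs := hχ.lift_snd _ _ w
    refine ⟨hχ.lift _ _ w, ?_, hs⟩
    rw [← cancel_mono f, assoc, hs, comp_id, id_comp]
  · intro h
    refine ⟨(MonoidalClosed.pre (inv f)).app c.Ω, ?_, ?_⟩
    · rw [← NatTrans.comp_app, ← MonoidalClosed.pre_map]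
      simp
    · rw [← NatTrans.comp_app, ← MonoidalClosed.pre_map]
      simp
end

section
/- Let E be an elementary topos, Z an object of E, and let F be the least subtopos of E containing Z, with reflector L : E → F. Then every F-dense monomorphism u : U → X in E (i.e., one with L u an isomorphism) is internally orthogonal to Z, that is, Z^u : Z^X → Z^U is an isomorphism. -/
open CategoryTheory Category Limits MonoidalCategory

universe u v u' v' u₂ v₂

theorem aux_precomp_bijective {E : Type u} [Category.{v} E] {F : Type u'} [Category.{v'} F]
    {i : F ⥤ E} {L : E ⥤ F} (adj : L ⊣ i) (Z : E) (hZ : IsIso (adj.unit.app Z))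
    {A B : E} (f : A ⟶ B) (hf : IsIso (L.map f)) :
    Function.Bijective (fun g : B ⟶ Z => f ≫ g) := by
  constructor
  · intro g h e
    have e : f ≫ g = f ≫ h := e
    have e2 : L.map g = L.map h := by
      rw [← cancel_epi (L.map f), ← L.map_comp, ← L.map_comp, e]
    rw [← cancel_mono (adj.unit.app Z)]
    have hg := adj.unit.naturality g
    have hh := adj.unit.naturality h
    simp only [Functor.id_map, Functor.comp_map] at hg hh
    rw [e2] at hg
    exact hg.trans hh.symm
  · intro g
    refine ⟨adj.unit.app B ≫ i.map (inv (L.map f)) ≫ i.map (L.map g) ≫ inv (adj.unit.app Z), ?_⟩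
    have hf' := adj.unit.naturality f
    have hg := adj.unit.naturality g
    simp only [Functor.id_map, Functor.comp_map] at hf' hg
    have e : i.map (L.map f) ≫ i.map (inv (L.map f)) = 𝟙 _ := by
      rw [← i.map_comp, IsIso.hom_inv_id, i.map_id]
    change f ≫ _ = g
    rw [reassoc_of% hf', reassoc_of% e, ← reassoc_of% hg, IsIso.hom_inv_id]
    exact Category.comp_id g

theorem aux_isPullback {E : Type u} [Category.{v} E] [CartesianMonoidalCategory E]
    {U X : E} (u : U ⟶ X) (A : E) :
    IsPullback (u ▷ A) (CartesianMonoidalCategory.fst U A)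
      (CartesianMonoidalCategory.fst X A) u := by
  refine ⟨⟨by simp⟩, ⟨PullbackCone.IsLimit.mk _
    (fun s => CartesianMonoidalCategory.lift s.snd
      (s.fst ≫ CartesianMonoidalCategory.snd X A)) ?_ ?_ ?_⟩⟩
  · intro s
    apply CartesianMonoidalCategory.hom_ext
    · simp [s.condition]
    · simp
  · intro s
    simp
  · intro s m h1 h2
    apply CartesianMonoidalCategory.hom_ext
    · simpa using h2
    · simp [← h1]

/-- Let `E` be an elementary topos, `Z` an object of `E`, and let `F` (with full
and faithful inclusion `i`, reflector `L ⊣ i` preserving finite limits) be the least subtopos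
of `E` containing `Z`.  Then every `F`-dense monomorphism `u : U ⟶ X` (one with `L.map u`
an isomorphism) is internally orthogonal to `Z`, i.e. `Z^u : Z^X ⟶ Z^U` is an isomorphism. -/
theorem dense_implies_internallyOrthogonal
    {E : Type u} [Category.{v} E] [HasFiniteLimits E] [CartesianMonoidalCategory E]
    [MonoidalClosed E] (c : _root_.Classifier E) (Z : E)
    {F : Type u'} [Category.{v'} F] (i : F ⥤ E) [i.Full] [i.Faithful]
    (L : E ⥤ F) (adj : L ⊣ i) [PreservesFiniteLimits L]
    (hZ : IsIso (adj.unit.app Z))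
    (hleast : ∀ {F' : Type u₂} [Category.{v₂} F'] (i' : F' ⥤ E), i'.Full → i'.Faithful →
      ∀ (L' : E ⥤ F') (adj' : L' ⊣ i'), PreservesFiniteLimits L' →
      IsIso (adj'.unit.app Z) → ∀ X : E, IsIso (adj.unit.app X) → IsIso (adj'.unit.app X))
    {U X : E} (u : U ⟶ X) (hu : Mono u) (hdense : IsIso (L.map u)) :
    IsIso ((MonoidalClosed.pre u).app Z) := by
  apply isIso_of_yoneda_map_bijective
  intro A
  have hiso : IsIso (L.map (u ▷ A)) := ((aux_isPullback u A).map L).isIso_fst_of_isIso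
  have hb := aux_precomp_bijective adj Z hZ (u ▷ A) hiso
  constructor
  · intro g h e
    have e : g ≫ (MonoidalClosed.pre u).app Z = h ≫ (MonoidalClosed.pre u).app Z := e
    apply MonoidalClosed.uncurry_injective
    apply hb.1
    change u ▷ A ≫ _ = u ▷ A ≫ _
    rw [← MonoidalClosed.uncurry_pre_app, ← MonoidalClosed.uncurry_pre_app, e]
  · intro g
    obtain ⟨h, hh⟩ := hb.2 (MonoidalClosed.uncurry g)
    have hh : u ▷ A ≫ h = MonoidalClosed.uncurry g := hh
    refine ⟨MonoidalClosed.curry h, ?_⟩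
    change MonoidalClosed.curry h ≫ (MonoidalClosed.pre u).app Z = g
    rw [MonoidalClosed.curry_pre_app, hh, MonoidalClosed.curry_uncurry]
end

section
/- Let E and S be cartesian closed categories with finite limits, let R : S → E be a fully faithful functor with a left adjoint L : E → S that preserves finite products. Then for every object A of S and every object Y of E, the canonical morphism R(A^{L Y}) → (R A)^Y (given by transposing the composite L(R(A^{L Y}) × Y) ≅ L(R(A^{L Y})) × L Y → A^{L Y} × L Y → A, using that L preserves finite products and the counit of L ⊣ R) is an isomorphism, naturally in both A and Y. -/
open CategoryTheory Category Limits MonoidalCategory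
open scoped CartesianClosed

universe u v u' v'

/-- The canonical morphism `R(A^{L Y}) ⟶ (R A)^Y`, obtained by transposing (along `L ⊣ R`
and currying) the composite
`L(Y × R(A^{L Y})) ⟶ L Y × L(R(A^{L Y})) ⟶ L Y × A^{L Y} ⟶ A`,
where the first map is the canonical comparison (an iso when `L` preserves finite products),
the second uses the counit of `L ⊣ R`, and the third is evaluation. -/
noncomputable def canonicalExpComparison
    {E : Type u} [Category.{v} E] [CartesianMonoidalCategory E] [MonoidalClosed E]
    {S : Type u'} [Category.{v'} S] [CartesianMonoidalCategory S] [MonoidalClosed S]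
    (R : S ⥤ E) (L : E ⥤ S) (adj : L ⊣ R) (A : S) (Y : E) :
    R.obj ((L.obj Y) ⟹ A) ⟶ (Y ⟹ R.obj A) :=
  MonoidalClosed.curry ((adj.homEquiv _ _)
    (CartesianMonoidalCategory.lift (L.map (CartesianMonoidalCategory.fst _ _))
        (L.map (CartesianMonoidalCategory.snd _ _) ≫ adj.counit.app ((L.obj Y) ⟹ A)) ≫
      (ihom.ev (L.obj Y)).app A))

/-- Precomposing the canonical morphism with `f` is a double transpose of `f`. -/
theorem comp_canonicalExpComparison
    {E : Type u} [Category.{v} E] [CartesianMonoidalCategory E] [MonoidalClosed E]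
    {S : Type u'} [Category.{v'} S] [CartesianMonoidalCategory S] [MonoidalClosed S]
    (R : S ⥤ E) (L : E ⥤ S) (adj : L ⊣ R) (A : S) (Y X : E)
    (f : X ⟶ R.obj ((L.obj Y) ⟹ A)) :
    f ≫ canonicalExpComparison R L adj A Y =
      MonoidalClosed.curry (adj.homEquiv _ _
        (CartesianMonoidalCategory.prodComparison L Y X ≫
          MonoidalClosed.uncurry ((adj.homEquiv _ _).symm f))) := by
  unfold canonicalExpComparison
  rw [← MonoidalClosed.curry_natural_left, ← adj.homEquiv_naturality_left,
    MonoidalClosed.uncurry_eq, ← Category.assoc, ← Category.assoc]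
  congr 3
  ext
  · simp [CartesianMonoidalCategory.prodComparison, ← Functor.map_comp]
  · have h : L.map (Y ◁ f) ≫ L.map (CartesianMonoidalCategory.snd _ _) =
        L.map (CartesianMonoidalCategory.snd _ _) ≫ L.map f := by
      rw [← L.map_comp, ← L.map_comp, CartesianMonoidalCategory.whiskerLeft_snd]
    have h' {Z : S} (k : L.obj (R.obj ((L.obj Y) ⟹ A)) ⟶ Z) :
        L.map (Y ◁ f) ≫ L.map (CartesianMonoidalCategory.snd _ _) ≫ k =
          L.map (CartesianMonoidalCategory.snd _ _) ≫ L.map f ≫ k := by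
      rw [← Category.assoc, h, Category.assoc]
    simp [CartesianMonoidalCategory.prodComparison, h', Adjunction.homEquiv_counit]

/-- If `R : S ⥤ E` is full and faithful with a finite-product preserving left
adjoint `L : E ⥤ S` (both `E` and `S` cartesian closed with finite limits), then for every
`A` in `S` and `Y` in `E` the canonical morphism `R(A^{L Y}) ⟶ (R A)^Y` is an isomorphism,
naturally in both `A` and `Y`. -/
theorem canonicalExpComparison_isIso_and_natural
    {E : Type u} [Category.{v} E] [HasFiniteLimits E] [CartesianMonoidalCategory E]
    [MonoidalClosed E]
    {S : Type u'} [Category.{v'} S] [HasFiniteLimits S] [CartesianMonoidalCategory S]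
    [MonoidalClosed S]
    (R : S ⥤ E) [R.Full] [R.Faithful] (L : E ⥤ S) (adj : L ⊣ R)
    [PreservesFiniteProducts L] :
    (∀ (A : S) (Y : E), IsIso (canonicalExpComparison R L adj A Y)) ∧
    (∀ (A A' : S) (f : A ⟶ A') (Y : E),
      canonicalExpComparison R L adj A Y ≫ (ihom Y).map (R.map f) =
        R.map ((ihom (L.obj Y)).map f) ≫ canonicalExpComparison R L adj A' Y) ∧
    (∀ (A : S) (Y Y' : E) (g : Y' ⟶ Y),
      canonicalExpComparison R L adj A Y ≫ (MonoidalClosed.pre g).app (R.obj A) =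
        R.map ((MonoidalClosed.pre (L.map g)).app A) ≫ canonicalExpComparison R L adj A Y') := by
  have key (A : S) (Y : E) : canonicalExpComparison R L adj A Y =
      MonoidalClosed.curry (adj.homEquiv _ _
        (CartesianMonoidalCategory.prodComparison L Y _ ≫
          MonoidalClosed.uncurry (adj.counit.app _))) := by
    have := comp_canonicalExpComparison R L adj A Y _ (𝟙 _)
    rwa [Category.id_comp, Adjunction.homEquiv_symm_id] at this
  refine ⟨fun A Y => ?_, fun A A' f Y => ?_, fun A Y Y' g => ?_⟩
  · rw [isIso_iff_yoneda_map_bijective]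
    intro X
    let e : (X ⟶ R.obj ((L.obj Y) ⟹ A)) ≃ (X ⟶ (Y ⟹ R.obj A)) :=
      (adj.homEquiv _ _).symm.trans
        (((ihom.adjunction (L.obj Y)).homEquiv _ _).symm.trans
          (((asIso (CartesianMonoidalCategory.prodComparison L Y X)).symm.homFromEquiv).trans
            ((adj.homEquiv _ _).trans ((ihom.adjunction Y).homEquiv _ _))))
    convert e.bijective using 1
    ext f
    exact comp_canonicalExpComparison R L adj A Y X f
  · rw [comp_canonicalExpComparison, key, ← MonoidalClosed.curry_natural_right,
      ← adj.homEquiv_naturality_right, Category.assoc, ← MonoidalClosed.uncurry_natural_right,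
      Adjunction.homEquiv_counit, adj.counit_naturality]
  · rw [comp_canonicalExpComparison, key, MonoidalClosed.curry_pre_app,
      ← adj.homEquiv_naturality_left, Adjunction.homEquiv_counit, adj.counit_naturality,
      MonoidalClosed.uncurry_pre_app,
      CartesianMonoidalCategory.prodComparison_natural_whiskerRight_assoc]
end

section
/- Let E be a cartesian closed category with finite limits, let S be an elementary topos with subobject classifier 2, and let R : S → E be a fully faithful functor with a finite-product preserving left adjoint L : E → S. Then for a morphism f : W → X in E the following are equivalent: (1) f is internally orthogonal to R 2, i.e., (R 2)^f is an isomorphism; (2) L f : L W → L X is an isomorphism in S; (3) for every object A of S, f is internally orthogonal to R A. -/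
open CategoryTheory Category Limits MonoidalCategory

universe u v u' v'

theorem ioPreIff {E : Type u} [Category.{v} E] [CartesianMonoidalCategory E]
    [MonoidalClosed E] {W X : E} (f : W ⟶ X) (Z : E) :
    IsIso ((MonoidalClosed.pre f).app Z) ↔
      ∀ Y : E, Function.Bijective (fun g : X ⊗ Y ⟶ Z => f ▷ Y ≫ g) := by
  rw [isIso_iff_yoneda_map_bijective]
  refine forall_congr' fun Y => ?_
  have h : (fun g : X ⊗ Y ⟶ Z => f ▷ Y ≫ g) =
      (MonoidalClosed.uncurry (A := W) (Y := Y) (X := Z)) ∘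
        (fun x : Y ⟶ (ihom X).obj Z => x ≫ (MonoidalClosed.pre f).app Z) ∘
        (MonoidalClosed.curry (A := X) (Y := Y) (X := Z)) := by
    funext g
    simp [MonoidalClosed.curry_pre_app]
  have hu : Function.Bijective (MonoidalClosed.uncurry (A := W) (Y := Y) (X := Z)) :=
    ((ihom.adjunction W).homEquiv Y Z).symm.bijective
  have hc : Function.Bijective (MonoidalClosed.curry (A := X) (Y := Y) (X := Z)) :=
    ((ihom.adjunction X).homEquiv Y Z).bijective
  rw [h, hu.of_comp_iff', Function.Bijective.of_comp_iff _ hc]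

theorem ioTransfer {C : Type u} [Category.{v} C] {P Q P' Q' : C} (p : P ⟶ Q) (p' : P' ⟶ Q')
    (i : P ⟶ P') (j : Q ⟶ Q') [IsIso i] [IsIso j] (h : p ≫ j = i ≫ p') (Z : C) 
    (hb : Function.Bijective (fun g : Q ⟶ Z => p ≫ g)) :
    Function.Bijective (fun g : Q' ⟶ Z => p' ≫ g) := by
  constructor
  · intro a b hab
    have : j ≫ a = j ≫ b := hb.1 (by
      simp only [← assoc, h] ; simp only [assoc]; exact congrArg (i ≫ ·) hab)
    exact (cancel_epi j).1 this
  · intro t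
    obtain ⟨g, hg⟩ := hb.2 (i ≫ t)
    refine ⟨inv j ≫ g, ?_⟩
    rw [← cancel_epi i]
    simp only at hg ⊢
    rw [← assoc, ← h, assoc, IsIso.hom_inv_id_assoc, hg]

theorem ioAdj {E : Type u} [Category.{v} E] {S : Type u'} [Category.{v'} S]
    (R : S ⥤ E) (L : E ⥤ S) (adj : L ⊣ R) {P Q : E} (p : P ⟶ Q) (A : S) :
    Function.Bijective (fun g : Q ⟶ R.obj A => p ≫ g) ↔
      Function.Bijective (fun g : L.obj Q ⟶ A => L.map p ≫ g) := by
  have h : (fun g : L.obj Q ⟶ A => L.map p ≫ g) =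
      (adj.homEquiv P A).symm ∘ (fun g : Q ⟶ R.obj A => p ≫ g) ∘ (adj.homEquiv Q A) := by
    funext g
    simp [Adjunction.homEquiv_naturality_left_symm]
  rw [h, (adj.homEquiv P A).symm.bijective.of_comp_iff',
    Function.Bijective.of_comp_iff _ (adj.homEquiv Q A).bijective]

open CartesianMonoidalCategory in
/-- equality predicate -/
theorem ioEq {S : Type u'} [Category.{v'} S] [CartesianMonoidalCategory S]
    (c : _root_.Classifier S) (T : S) : ∃ δ : T ⊗ T ⟶ c.Ω, ∀ {U : S} (a b : U ⟶ T),
      lift a b ≫ δ = toUnit U ≫ c.truth ↔ a = b := by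
  have : Mono (lift (𝟙 T) (𝟙 T)) := ⟨fun a b h => by
    simpa using congrArg (· ≫ fst _ _) h⟩
  obtain ⟨δ, hδ, -⟩ := c.classifies (lift (𝟙 T) (𝟙 T)) this
  refine ⟨δ, fun {U} a b => ⟨fun h => ?_, ?_⟩⟩
  · have e := hδ.lift_snd (toUnit U) (lift a b) h.symm
    have e1 := congrArg (· ≫ fst _ _) e
    have e2 := congrArg (· ≫ snd _ _) e
    simp at e1 e2
    exact e1.symm.trans e2
  · rintro rfl
    have : lift a a = a ≫ lift (𝟙 T) (𝟙 T) := by simp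
    rw [this, assoc, ← hδ.w, ← assoc]
    congr 1
    exact toUnit_unique _ _

open CartesianMonoidalCategory in
theorem ioTopos {S : Type u'} [Category.{v'} S] [CartesianMonoidalCategory S]
    (c : _root_.Classifier S) {A B : S} (g : A ⟶ B)
    (h : ∀ C : S, Function.Bijective (fun k : B ⊗ C ⟶ c.Ω => g ▷ C ≫ k)) : IsIso g := by
  have hm : Mono g := ⟨fun {T} a b hab => by
    obtain ⟨δ, hδ⟩ := ioEq c A
    obtain ⟨θ, hθ⟩ := (h A).2 δ
    simp only at hθ
    rw [eq_comm, ← hδ, ← hθ]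
    have : lift b a ≫ g ▷ A = lift a a ≫ g ▷ A := by simp [hab]
    rw [← assoc, this, assoc, hθ, hδ]⟩
  have he : Epi g := ⟨fun {T} a b hab => by
    obtain ⟨δ, hδ⟩ := ioEq c T
    have : a ▷ T ≫ δ = b ▷ T ≫ δ := (h T).1 (by
      simp only [← assoc, ← comp_whiskerRight, hab])
    have h2 := congrArg (fun t => lift (𝟙 B) a ≫ t) this
    simp only [← assoc] at h2
    simp only [lift_whiskerRight, id_comp] at h2
    rw [eq_comm, ← hδ, ← h2, hδ]⟩
  obtain ⟨χ, hχ, -⟩ := c.classifies g hm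
  have hχ' : χ = toUnit B ≫ c.truth := by
    rw [← cancel_epi g, ← hχ.w, ← assoc]
    congr 1
    exact toUnit_unique _ _
  have e := hχ.lift_snd (toUnit B) (𝟙 B) (by rw [id_comp, hχ'])
  exact ⟨hχ.lift (toUnit B) (𝟙 B) (by rw [id_comp, hχ']),
    by rw [← cancel_mono g, assoc, e, comp_id, id_comp], e⟩

/-- Let `E` be cartesian closed with finite limits, `S` an elementary topos with
subobject classifier `2 = c.Ω`, and `R : S ⥤ E` a full and faithful functor with a
finite-product preserving left adjoint `L : E ⥤ S`.  For `f : W ⟶ X` in `E` the following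
are equivalent: (1) `f` is internally orthogonal to `R 2`; (2) `L.map f` is an isomorphism;
(3) `f` is internally orthogonal to `R A` for every `A` in `S`. -/
theorem internallyOrthogonal_R2_iff_iso_iff_all
    {E : Type u} [Category.{v} E] [HasFiniteLimits E] [CartesianMonoidalCategory E]
    [MonoidalClosed E]
    {S : Type u'} [Category.{v'} S] [HasFiniteLimits S] [CartesianMonoidalCategory S]
    [MonoidalClosed S] (c : _root_.Classifier S)
    (R : S ⥤ E) [R.Full] [R.Faithful] (L : E ⥤ S) (adj : L ⊣ R)
    [PreservesFiniteProducts L]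
    {W X : E} (f : W ⟶ X) :
    (IsIso ((MonoidalClosed.pre f).app (R.obj c.Ω)) ↔ IsIso (L.map f)) ∧
    (IsIso (L.map f) ↔ ∀ A : S, IsIso ((MonoidalClosed.pre f).app (R.obj A))) := by
  have h23 : IsIso (L.map f) → ∀ A : S, IsIso ((MonoidalClosed.pre f).app (R.obj A)) := by
    intro hf A
    rw [ioPreIff]
    intro Y
    rw [ioAdj R L adj]
    have hn := CartesianMonoidalCategory.prodComparison_natural_whiskerRight L (B := Y) f
    have : IsIso (L.map (f ▷ Y)) := by
      rw [← isIso_comp_right_iff _ (CartesianMonoidalCategory.prodComparison L X Y), hn]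
      infer_instance
    exact ⟨fun a b hab => (cancel_epi (L.map (f ▷ Y))).1 hab,
      fun t => ⟨inv (L.map (f ▷ Y)) ≫ t, by simp⟩⟩
  have h12 : IsIso ((MonoidalClosed.pre f).app (R.obj c.Ω)) → IsIso (L.map f) := by
    intro h
    rw [ioPreIff] at h
    refine ioTopos c _ fun C => ?_
    have hC := (ioAdj R L adj _ _).1 (h (R.obj C))
    have hn := CartesianMonoidalCategory.prodComparison_natural_whiskerRight L (B := R.obj C) f
    refine ioTransfer _ _
      (CartesianMonoidalCategory.prodComparison L W (R.obj C) ≫ _ ◁ adj.counit.app C)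
      (CartesianMonoidalCategory.prodComparison L X (R.obj C) ≫ _ ◁ adj.counit.app C)
      ?_ _ hC
    rw [← assoc, hn, assoc, assoc]
    exact congrArg _ (whisker_exchange (L.map f) (adj.counit.app C)).symm
  exact ⟨⟨h12, fun h => h23 h _⟩, ⟨h23, fun h => h12 (h _)⟩⟩
end

section
/- Let p : E → S be a pre-cohesive geometric morphism between elementary toposes, and let 2 denote the subobject classifier of S. Then for a morphism f : W → X in E the following are equivalent: (1) f is internally orthogonal to p^* 2, i.e., (p^* 2)^f is an isomorphism; (2) p_! f : p_! W → p_! X is an isomorphism in S; (3) for every object A of S, f is internally orthogonal to p^* A. -/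
open CategoryTheory Category Limits MonoidalCategory

universe u v u' v'

theorem pre_isIso_iff {E : Type u} [Category.{v} E] [CartesianMonoidalCategory E]
    [MonoidalClosed E] {W X : E} (f : W ⟶ X) (Z : E) :
    IsIso ((MonoidalClosed.pre f).app Z) ↔
      ∀ Y : E, Function.Bijective (fun h : X ⊗ Y ⟶ Z => f ▷ Y ≫ h) := by
  rw [isIso_iff_yoneda_map_bijective]
  refine forall_congr' fun Y => ?_
  have key : (fun x : Y ⟶ (ihom X).obj Z => x ≫ (MonoidalClosed.pre f).app Z) ∘
      (MonoidalClosed.curry : (X ⊗ Y ⟶ Z) → _) =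
      (MonoidalClosed.curry : (W ⊗ Y ⟶ Z) → _) ∘ (fun h : X ⊗ Y ⟶ Z => f ▷ Y ≫ h) := by
    funext h
    simp [MonoidalClosed.curry_pre_app]
  have b1 : Function.Bijective (MonoidalClosed.curry : (X ⊗ Y ⟶ Z) → _) :=
    ((ihom.adjunction X).homEquiv Y Z).bijective
  have b2 : Function.Bijective (MonoidalClosed.curry : (W ⊗ Y ⟶ Z) → _) :=
    ((ihom.adjunction W).homEquiv Y Z).bijective
  rw [← Function.Bijective.of_comp_iff _ b1, key, Function.Bijective.of_comp_iff' b2]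

open CartesianMonoidalCategory in
theorem classifier_isIso {S : Type u} [Category.{v} S] [CartesianMonoidalCategory S]
    (c : _root_.Classifier S) {A B : S} (g : A ⟶ B)
    (h : ∀ C : S, Function.Bijective (fun k : B ⊗ C ⟶ c.Ω => g ▷ C ≫ k)) : IsIso g := by
  -- internal equality
  have eqq : ∀ C : S, ∃ e : C ⊗ C ⟶ c.Ω, ∀ {T : S} (a b : T ⟶ C),
      lift a b ≫ e = lift b b ≫ e → a = b := by
    intro C
    have hm : Mono (lift (𝟙 C) (𝟙 C)) := ⟨fun a b hab => by
      simpa using congrArg (· ≫ fst _ _) hab⟩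
    obtain ⟨e, he, -⟩ := c.classifies (lift (𝟙 C) (𝟙 C)) hm
    refine ⟨e, fun {T} a b hab => ?_⟩
    have h1 : lift b b ≫ e = toUnit T ≫ c.truth := by
      have : lift b b = b ≫ lift (𝟙 C) (𝟙 C) := by simp
      rw [this, Category.assoc, ← he.w, ← Category.assoc]
      congr 1
      exact toUnit_unique _ _
    have h2 := he.lift_snd (toUnit T) (lift a b) (by rw [hab, h1])
    have h3 := congrArg (· ≫ fst _ _) h2
    have h4 := congrArg (· ≫ snd _ _) h2
    simp at h3 h4
    rw [← h3, h4]
  have mono : Mono g := by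
    refine ⟨fun {T} a b hab => ?_⟩
    obtain ⟨e, he⟩ := eqq A
    obtain ⟨k, hk⟩ := (h A).2 e
    apply he
    rw [← hk]
    simp [hab]
  have epi : Epi g := by
    refine ⟨fun {C} a b hab => ?_⟩
    obtain ⟨e, he⟩ := eqq C
    have := (h C).1 (a₁ := a ▷ C ≫ e) (a₂ := b ▷ C ≫ e) (by
      simp only [← Category.assoc, ← comp_whiskerRight, hab])
    apply he
    simpa using congrArg (lift (𝟙 B) b ≫ ·) this
  obtain ⟨χ, hχ, -⟩ := c.classifies g mono
  have hχ' : χ = toUnit B ≫ c.truth := by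
    rw [← cancel_epi g, ← hχ.w, ← Category.assoc]
    congr 1
    exact toUnit_unique _ _
  have hs := hχ.lift_snd (toUnit B) (𝟙 B) (by simp [hχ'])
  have : IsSplitEpi g := IsSplitEpi.mk' ⟨_, hs⟩
  exact isIso_of_mono_of_isSplitEpi g

/-- Let `p : E ⟶ S` be a pre-cohesive geometric morphism between elementary
toposes, given by an adjoint string `p_! ⊣ p^* ⊣ p_* ⊣ p^!` with `p^*` finite-limit
preserving and fully faithful, the unit and counit of `p^* ⊣ p_*` monic, and `p_!`
finite-product preserving. Let `2 = cS.Ω` be the subobject classifier of `S`.  For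
`f : W ⟶ X` in `E` the following are equivalent: (1) `f` is internally orthogonal to
`p^* 2`; (2) `p_! f` is an isomorphism in `S`; (3) `f` is internally orthogonal to `p^* A`
for every `A` in `S`. -/
theorem precohesive_internallyOrthogonal_iff
    {E : Type u} [Category.{v} E] [HasFiniteLimits E] [CartesianMonoidalCategory E]
    [MonoidalClosed E] (cE : _root_.Classifier E)
    {S : Type u'} [Category.{v'} S] [HasFiniteLimits S] [CartesianMonoidalCategory S]
    [MonoidalClosed S] (cS : _root_.Classifier S)
    (pShriek : E ⥤ S) (pStar : S ⥤ E) (pLower : E ⥤ S) (pUpper : S ⥤ E)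
    (adj₁ : pShriek ⊣ pStar) (adj₂ : pStar ⊣ pLower) (adj₃ : pLower ⊣ pUpper)
    [PreservesFiniteLimits pStar] [pStar.Full] [pStar.Faithful]
    (hUnitMono : ∀ A : S, Mono (adj₂.unit.app A))
    (hCounitMono : ∀ X : E, Mono (adj₂.counit.app X))
    [PreservesFiniteProducts pShriek]
    {W X : E} (f : W ⟶ X) :
    (IsIso ((MonoidalClosed.pre f).app (pStar.obj cS.Ω)) ↔ IsIso (pShriek.map f)) ∧
    (IsIso (pShriek.map f) ↔ ∀ A : S, IsIso ((MonoidalClosed.pre f).app (pStar.obj A))) := by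
  let _ : pShriek.Monoidal := .ofChosenFiniteProducts pShriek
  -- transposing along `p_! ⊣ p^*`
  have trans : ∀ (A : S) (Y : E),
      Function.Bijective (fun h : X ⊗ Y ⟶ pStar.obj A => f ▷ Y ≫ h) ↔
      Function.Bijective (fun k : pShriek.obj X ⊗ pShriek.obj Y ⟶ A =>
        pShriek.map f ▷ pShriek.obj Y ≫ k) := by
    intro A Y
    let eX : (pShriek.obj X ⊗ pShriek.obj Y ⟶ A) ≃ (X ⊗ Y ⟶ pStar.obj A) :=
      ((Functor.Monoidal.μIso pShriek X Y).homFromEquiv).trans (adj₁.homEquiv _ _)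
    let eW : (pShriek.obj W ⊗ pShriek.obj Y ⟶ A) ≃ (W ⊗ Y ⟶ pStar.obj A) :=
      ((Functor.Monoidal.μIso pShriek W Y).homFromEquiv).trans (adj₁.homEquiv _ _)
    have key : (fun h : X ⊗ Y ⟶ pStar.obj A => f ▷ Y ≫ h) ∘ eX =
        eW ∘ (fun k : pShriek.obj X ⊗ pShriek.obj Y ⟶ A =>
          pShriek.map f ▷ pShriek.obj Y ≫ k) := by
      funext k
      simp [eX, eW, ← adj₁.homEquiv_naturality_left]
    rw [← Function.Bijective.of_comp_iff _ eX.bijective, key,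
      Function.Bijective.of_comp_iff' eW.bijective]
  have h23 : IsIso (pShriek.map f) →
      ∀ A : S, IsIso ((MonoidalClosed.pre f).app (pStar.obj A)) := by
    intro hf A
    rw [pre_isIso_iff]
    intro Y
    rw [trans]
    exact ((asIso (pShriek.map f ▷ pShriek.obj Y)).symm.homFromEquiv).bijective
  have h12 : IsIso ((MonoidalClosed.pre f).app (pStar.obj cS.Ω)) →
      IsIso (pShriek.map f) := by
    intro hf
    rw [pre_isIso_iff] at hf
    refine classifier_isIso cS _ fun C => ?_
    have hC := (trans _ _).1 (hf (pStar.obj C))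
    let i : pShriek.obj (pStar.obj C) ≅ C := asIso (adj₁.counit.app C)
    let eX : (pShriek.obj X ⊗ pShriek.obj (pStar.obj C) ⟶ cS.Ω) ≃ (pShriek.obj X ⊗ C ⟶ cS.Ω) :=
      (whiskerLeftIso (pShriek.obj X) i).homFromEquiv
    let eW : (pShriek.obj W ⊗ pShriek.obj (pStar.obj C) ⟶ cS.Ω) ≃ (pShriek.obj W ⊗ C ⟶ cS.Ω) :=
      (whiskerLeftIso (pShriek.obj W) i).homFromEquiv
    have key : (fun k : pShriek.obj X ⊗ C ⟶ cS.Ω => pShriek.map f ▷ C ≫ k) ∘ eX =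
        eW ∘ (fun k => pShriek.map f ▷ pShriek.obj (pStar.obj C) ≫ k) := by
      funext k
      simp [eX, eW, whisker_exchange_assoc]
    rw [← Function.Bijective.of_comp_iff _ eX.bijective, key,
      Function.Bijective.of_comp_iff' eW.bijective]
    exact hC
  exact ⟨⟨h12, fun h => h23 h _⟩, ⟨h23, fun h => h12 (h _)⟩⟩
end

section
/- Let p : E → S be a hyperconnected geometric morphism between elementary toposes (p^* ⊣ p_*, p^* preserves finite limits, and the unit and counit of p^* ⊣ p_* are monomorphisms). Then for every monomorphism u : U → X in E, the naturality square of the counit β of p^* ⊣ p_*, with horizontal edges β_U : p^*(p_* U) → U and β_X : p^*(p_* X) → X and vertical edges p^*(p_* u) and u, is a pullback square. -/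
open CategoryTheory Category Limits MonoidalCategory

universe u v u' v'

/-- Let `p : E ⟶ S` be a hyperconnected geometric morphism between elementary
toposes (`p^* ⊣ p_*`, `p^*` preserves finite limits, and the unit and counit of `p^* ⊣ p_*`
are monomorphisms).  Then for every monomorphism `u : U ⟶ X` in `E`, the naturality square
of the counit `β` of `p^* ⊣ p_*`, with horizontal edges `β_U : p^*(p_* U) ⟶ U` and
`β_X : p^*(p_* X) ⟶ X` and vertical edges `p^*(p_* u)` and `u`, is a pullback square. -/
theorem hyperconnected_counit_naturality_isPullback
    {E : Type u} [Category.{v} E] [HasFiniteLimits E] [CartesianMonoidalCategory E]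
    [MonoidalClosed E] (cE : _root_.Classifier E)
    {S : Type u'} [Category.{v'} S] [HasFiniteLimits S] [CartesianMonoidalCategory S]
    [MonoidalClosed S] (cS : _root_.Classifier S)
    (pStar : S ⥤ E) (pLower : E ⥤ S) (adj : pStar ⊣ pLower)
    [PreservesFiniteLimits pStar]
    (hUnitMono : ∀ A : S, Mono (adj.unit.app A))
    (hCounitMono : ∀ X : E, Mono (adj.counit.app X))
    {U X : E} (u : U ⟶ X) (hu : Mono u) :
    IsPullback (adj.counit.app U) (pStar.map (pLower.map u)) u (adj.counit.app X) := by
  have hcm := hCounitMono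
  have hV : Mono (pullback.snd u (adj.counit.app X)) := inferInstance
  obtain ⟨χ, hχ, -⟩ := cE.classifies (pullback.snd u (adj.counit.app X)) hV
  -- the terminal object is preserved by `pStar`
  have hT : IsTerminal (pStar.obj (𝟙_ S)) :=
    IsTerminal.isTerminalObj pStar _ CartesianMonoidalCategory.isTerminalTensorUnit
  let t : 𝟙_ S ⟶ pLower.obj cE.Ω :=
    adj.homEquiv _ _ (CartesianMonoidalCategory.toUnit (pStar.obj (𝟙_ S)) ≫ cE.truth)
  let c : pLower.obj X ⟶ pLower.obj cE.Ω := adj.homEquiv _ _ χ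
  have ht : pStar.map t ≫ adj.counit.app cE.Ω =
      CartesianMonoidalCategory.toUnit (pStar.obj (𝟙_ S)) ≫ cE.truth := by
    exact (adj.homEquiv_counit _ _ _).symm.trans (Equiv.symm_apply_apply _ _)
  have hc : pStar.map c ≫ adj.counit.app cE.Ω = χ := by
    exact (adj.homEquiv_counit _ _ _).symm.trans (Equiv.symm_apply_apply _ _)
  have hB : IsPullback (pStar.map (pullback.fst t c)) (pStar.map (pullback.snd t c))
      (pStar.map t) (pStar.map c) := (IsPullback.of_hasPullback t c).map pStar
  -- the comparison maps between the pullback `V` and `pStar B`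
  have hk : CartesianMonoidalCategory.toUnit _ ≫ cE.truth =
      pStar.map (pullback.snd t c) ≫ χ := by
    rw [← hc, ← hB.w_assoc, ht, ← Category.assoc]
    congr 1
    exact CartesianMonoidalCategory.toUnit_unique _ _
  have hj : hT.from _ ≫ pStar.map t = pullback.snd u (adj.counit.app X) ≫ pStar.map c := by
    rw [← cancel_mono (adj.counit.app cE.Ω), Category.assoc, Category.assoc, ht, hc, ← hχ.w,
      ← Category.assoc]
    congr 1
    exact CartesianMonoidalCategory.toUnit_unique _ _
  let k := hχ.lift _ _ hk
  let j := hB.lift _ _ hj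
  have hjk : j ≫ k = 𝟙 _ := by
    rw [← cancel_mono (pullback.snd u (adj.counit.app X)), Category.assoc, hχ.lift_snd,
      hB.lift_snd, Category.id_comp]
  let g := adj.homEquiv _ _ (k ≫ pullback.fst u (adj.counit.app X))
  have hg : pStar.map g ≫ adj.counit.app U = k ≫ pullback.fst u (adj.counit.app X) := by
    exact (adj.homEquiv_counit _ _ _).symm.trans (Equiv.symm_apply_apply _ _)
  have hw : (j ≫ pStar.map g) ≫ adj.counit.app U = pullback.fst u (adj.counit.app X) := by
    rw [Category.assoc, hg, ← Category.assoc, hjk, Category.id_comp]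
  have sq : adj.counit.app U ≫ u = pStar.map (pLower.map u) ≫ adj.counit.app X :=
    (adj.counit.naturality u).symm
  refine ⟨⟨sq⟩, ⟨PullbackCone.IsLimit.mk _
    (fun s => pullback.lift s.fst s.snd s.condition ≫ j ≫ pStar.map g) ?_ ?_ ?_⟩⟩
  · intro s
    rw [Category.assoc, hw, pullback.lift_fst]
  · intro s
    rw [← cancel_mono (adj.counit.app X), Category.assoc, ← sq, ← Category.assoc,
      Category.assoc _ _ (adj.counit.app U), hw, pullback.lift_fst, s.condition]
  · intro s m h1 _
    rw [← cancel_mono (adj.counit.app U), h1, Category.assoc, hw, pullback.lift_fst]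
end

section
/- Let p : E → S be a pre-cohesive geometric morphism between elementary toposes, let 2 be the subobject classifier of S, and let F be the least subtopos of E containing p^* 2, with reflector L_F : E → F. Then a monomorphism u : U → X in E is F-dense (i.e., L_F u is an isomorphism) if and only if for every pullback square in E with u on one side and v : V → Y as the pulled-back monomorphism, the morphism p_! v is an isomorphism in S. -/
open CategoryTheory Category Limits MonoidalCategory

universe u v u' v' u₂ v₂

set_option linter.unusedSectionVars false

namespace PC
open CartesianMonoidalCategory

section logic

variable {E : Type u} [Category.{v} E] [CartesianMonoidalCategory E]
  (c : _root_.Classifier E)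

/-- The true predicate on `T`. -/
def tr (T : E) : T ⟶ c.Ω := toUnit T ≫ c.truth

lemma comp_tr {T T' : E} (f : T' ⟶ T) : f ≫ tr c T = tr c T' := by
  simp [tr, ← Category.assoc]

/-- `m` is the extension of the predicate `ω`. -/
structure IsSub {U X : E} (m : U ⟶ X) (ω : X ⟶ c.Ω) : Prop where
  mono : Mono m
  tr : m ≫ ω = tr c U
  lift : ∀ {T : E} (t : T ⟶ X), t ≫ ω = PC.tr c T → ∃ l, l ≫ m = t

variable {c}

lemma IsSub.isPullback {U X : E} {m : U ⟶ X} {ω : X ⟶ c.Ω} (h : IsSub c m ω) :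
    IsPullback (toUnit U) m c.truth ω := by
  have := h.mono
  have hs : ∀ s : PullbackCone c.truth ω, s.snd ≫ ω = PC.tr c s.pt := by
    intro s
    rw [← s.condition, PC.tr]; exact congrArg (· ≫ c.truth) (toUnit_unique _ _)
  refine ⟨⟨by rw [h.tr]; rfl⟩,
    ⟨PullbackCone.IsLimit.mk _ (fun s => (h.lift s.snd (hs s)).choose) ?_ ?_ ?_⟩⟩
  · intro s; exact toUnit_unique _ _
  · intro s
    exact (h.lift s.snd (hs s)).choose_spec
  · intro s k _ hk
    rw [← cancel_mono m, hk]
    exact (h.lift s.snd (hs s)).choose_spec.symm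

lemma IsSub.of_isPullback {U X : E} {m : U ⟶ X} {ω : X ⟶ c.Ω} (hm : Mono m)
    (h : IsPullback (toUnit U) m c.truth ω) : IsSub c m ω :=
  ⟨hm, h.w.symm, fun t ht => ⟨h.lift (toUnit _) t ht.symm, h.lift_snd _ _ _⟩⟩

lemma IsSub.uniq {U X : E} {m : U ⟶ X} {ω ω' : X ⟶ c.Ω} (h : IsSub c m ω) (h' : IsSub c m ω') :
    ω = ω' :=
  (c.classifies m h.mono).unique h.isPullback h'.isPullback

lemma exists_char {U X : E} (m : U ⟶ X) (hm : Mono m) : ∃ ω, IsSub c m ω := by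
  obtain ⟨χ, h, -⟩ := c.classifies m hm
  exact ⟨χ, .of_isPullback hm h⟩

lemma IsSub.iff {U X : E} {m : U ⟶ X} {ω : X ⟶ c.Ω} (h : IsSub c m ω) {T : E} (t : T ⟶ X) :
    t ≫ ω = PC.tr c T ↔ ∃ l, l ≫ m = t := by
  refine ⟨h.lift t, ?_⟩
  rintro ⟨l, rfl⟩
  rw [Category.assoc, h.tr, comp_tr]

variable [HasFiniteLimits E]

lemma mono_truth : Mono c.truth :=
  ⟨fun _ _ _ => toUnit_unique _ _⟩

variable (c) in
/-- The extension of a predicate. -/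
noncomputable def Sub {X : E} (ω : X ⟶ c.Ω) : E := pullback c.truth ω

variable (c) in
/-- The inclusion of the extension of a predicate. -/
noncomputable def inc {X : E} (ω : X ⟶ c.Ω) : Sub c ω ⟶ X := pullback.snd c.truth ω

lemma isSub_inc {X : E} (ω : X ⟶ c.Ω) : IsSub c (inc c ω) ω := by
  have := mono_truth (c := c)
  refine .of_isPullback (inferInstanceAs (Mono (pullback.snd c.truth ω))) ?_
  have h := IsPullback.of_hasPullback c.truth ω
  rw [toUnit_unique (pullback.fst c.truth ω) (toUnit _)] at h
  exact h

instance {X : E} (ω : X ⟶ c.Ω) : Mono (inc c ω) := (isSub_inc ω).mono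

lemma inc_tr {X : E} (ω : X ⟶ c.Ω) : inc c ω ≫ ω = tr c _ := (isSub_inc ω).tr

lemma pext {X : E} {ω ω' : X ⟶ c.Ω}
    (h : ∀ {T : E} (t : T ⟶ X), t ≫ ω = tr c T ↔ t ≫ ω' = tr c T) : ω = ω' := by
  refine (isSub_inc ω).uniq ⟨inferInstance, (h _).1 (inc_tr ω), fun t ht => ?_⟩
  exact (isSub_inc ω).lift t ((h _).2 ht)

variable (c) in
/-- A (Kripke–Joyal) predicate is representable. -/
def Rep {X : E} (P : ∀ {T : E}, (T ⟶ X) → Prop) : Prop :=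
  ∃ χ : X ⟶ c.Ω, ∀ {T : E} (t : T ⟶ X), t ≫ χ = tr c T ↔ P t

lemma Rep.congr {X : E} {P Q : ∀ {T : E}, (T ⟶ X) → Prop} (h : Rep c @P)
    (hPQ : ∀ {T : E} (t : T ⟶ X), P t ↔ Q t) : Rep c @Q := by
  obtain ⟨χ, h⟩ := h
  exact ⟨χ, fun t => (h t).trans (hPQ t)⟩

lemma rep_mono {U X : E} (m : U ⟶ X) (hm : Mono m) : Rep c (fun t => ∃ l, l ≫ m = t) := by
  obtain ⟨χ, h⟩ := exists_char (c := c) m hm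
  exact ⟨χ, fun t => h.iff t⟩

lemma Rep.pull {X Y : E} {P : ∀ {T : E}, (T ⟶ X) → Prop} (h : Rep c @P) (f : Y ⟶ X) :
    Rep c (fun t => P (t ≫ f)) := by
  obtain ⟨χ, h⟩ := h
  exact ⟨f ≫ χ, fun t => by rw [← Category.assoc, h]⟩

lemma rep_eq {X Y : E} (f g : X ⟶ Y) : Rep c (fun t => t ≫ f = t ≫ g) := by
  refine (rep_mono (equalizer.ι f g) inferInstance).congr fun t => ⟨?_, ?_⟩
  · rintro ⟨l, rfl⟩
    rw [Category.assoc, Category.assoc, equalizer.condition]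
  · intro h; exact ⟨equalizer.lift t h, by simp⟩

lemma rep_true : Rep c (X := c.Ω) (fun {T} t => t = tr c T) :=
  ⟨𝟙 _, fun t => by simp⟩

lemma rep_exists {Q B : E} (g : Q ⟶ B) {P : ∀ {T : E}, (T ⟶ Q) → Prop} (h : Rep c @P)
    (huniq : ∀ {T : E} (q q' : T ⟶ Q), P q → P q' → q ≫ g = q' ≫ g → q = q') :
    Rep c (fun {T} (b : T ⟶ B) => ∃ q : T ⟶ Q, q ≫ g = b ∧ P q) := by
  obtain ⟨χ, h⟩ := h
  have hm : Mono (inc c χ ≫ g) := by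
    refine ⟨fun a b hab => ?_⟩
    rw [← cancel_mono (inc c χ)]
    have key : ∀ {T : E} (a : T ⟶ Sub c χ), P (a ≫ inc c χ) := fun a => by
      rw [← h, Category.assoc, inc_tr, comp_tr]
    exact huniq _ _ (key a) (key b) (by simpa using hab)
  refine (rep_mono (inc c χ ≫ g) hm).congr fun b => ⟨?_, ?_⟩
  · rintro ⟨l, rfl⟩
    refine ⟨l ≫ inc c χ, by simp, ?_⟩
    rw [← h, Category.assoc, inc_tr, comp_tr]
  · rintro ⟨q, rfl, hq⟩
    obtain ⟨l, rfl⟩ := (isSub_inc χ).lift q ((h q).2 hq)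
    exact ⟨l, by simp⟩

lemma rep_and {X : E} {P Q : ∀ {T : E}, (T ⟶ X) → Prop} (hP : Rep c @P) (hQ : Rep c @Q) :
    Rep c (fun t => P t ∧ Q t) := by
  obtain ⟨p, hP⟩ := hP
  obtain ⟨q, hQ⟩ := hQ
  refine (rep_eq (c := c) (lift p q) (lift (tr c X) (tr c X))).congr fun t => ?_
  rw [← hP, ← hQ, comp_lift, comp_lift, comp_tr]
  constructor
  · intro h
    exact ⟨by simpa using congrArg (· ≫ fst _ _) h, by simpa using congrArg (· ≫ snd _ _) h⟩
  · rintro ⟨h, h'⟩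
    rw [h, h']

variable [MonoidalClosed E]

lemma rep_forall {Q B : E} (g : Q ⟶ B) {N : ∀ {T : E}, (T ⟶ Q) → Prop} (h : Rep c @N) :
    Rep c (fun {T} (b : T ⟶ B) => ∀ {T' : E} (s : T' ⟶ T) (q : T' ⟶ Q),
      q ≫ g = s ≫ b → N q) := by
  have h0 := rep_eq (c := c) (X := Q ⊗ B) (fst Q B ≫ g) (snd Q B)
  obtain ⟨φ, hφ⟩ := h0
  obtain ⟨ψ, hψ⟩ := rep_and ⟨φ, hφ⟩ (h.pull (fst Q B))
  refine (rep_eq (c := c) (MonoidalClosed.curry φ) (MonoidalClosed.curry ψ)).congr fun {T} b => ?_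
  rw [← MonoidalClosed.curry_natural_left, ← MonoidalClosed.curry_natural_left,
    (MonoidalClosed.curry_injective (A := Q)).eq_iff]
  constructor
  · intro heq T' s q hq
    have h1 : lift q s ≫ Q ◁ b ≫ φ = tr c _ := by
      rw [← Category.assoc, hφ]; simpa using hq
    rw [heq, ← Category.assoc, hψ] at h1
    simpa using h1.2
  · intro H
    apply pext
    intro T' t
    rw [← Category.assoc, ← Category.assoc, hφ, hψ]
    constructor
    · intro h
      refine ⟨h, ?_⟩
      apply H (t ≫ snd _ _) 
      simpa using h
    · exact fun h => h.1

lemma rep_imp {X : E} {P Q : ∀ {T : E}, (T ⟶ X) → Prop} (hP : Rep c @P) (hQ : Rep c @Q) :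
    Rep c (fun {T} (t : T ⟶ X) => ∀ {T' : E} (s : T' ⟶ T), P (s ≫ t) → Q (s ≫ t)) := by
  obtain ⟨p, hP⟩ := hP
  refine (rep_forall (inc c p) (hQ.pull (inc c p))).congr fun {T} t => ⟨?_, ?_⟩
  · intro H T' s hs
    obtain ⟨l, hl⟩ := (isSub_inc p).lift _ ((hP _).2 hs)
    rw [← hl]
    exact H s l hl
  · intro H T' s q hq
    rw [hq]
    apply H
    rw [← hP, ← hq, Category.assoc, inc_tr, comp_tr]

end logic

end PC

namespace PC
open CartesianMonoidalCategory

section dense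

variable {E : Type u} [Category.{v} E] [CartesianMonoidalCategory E]
  [HasFiniteLimits E] (c : _root_.Classifier E)

/-- `C` is orthogonal to the extension of `ω`. -/
def Bij (C : E) {T : E} (ω : T ⟶ c.Ω) : Prop :=
  ∀ z : Sub c ω ⟶ C, ∃! z' : T ⟶ C, inc c ω ≫ z' = z

variable {c}

lemma orth_of_isSub {C T V V' : E} {m : V ⟶ T} {m' : V' ⟶ T} {ω : T ⟶ c.Ω}
    (h : IsSub c m ω) (h' : IsSub c m' ω) (H : ∀ z : V ⟶ C, ∃! z' : T ⟶ C, m ≫ z' = z)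
    (z : V' ⟶ C) : ∃! z' : T ⟶ C, m' ≫ z' = z := by
  obtain ⟨l, hl⟩ := h'.lift m h.tr
  obtain ⟨k, hk⟩ := h.lift m' h'.tr
  have := h.mono
  have := h'.mono
  have hkl : k ≫ l = 𝟙 _ := by rw [← cancel_mono m']; simp [hl, hk]
  obtain ⟨w, hw, hu⟩ := H (l ≫ z)
  refine ⟨w, ?_, fun y hy => hu y ?_⟩
  · simp only
    rw [← hk, Category.assoc, hw, ← Category.assoc, hkl, Category.id_comp]
  · simp only
    rw [← hl, Category.assoc, hy]

lemma IsSub.bij_iff {C T V : E} {m : V ⟶ T} {ω : T ⟶ c.Ω} (h : IsSub c m ω) :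
    Bij c C ω ↔ ∀ z : V ⟶ C, ∃! z' : T ⟶ C, m ≫ z' = z :=
  ⟨fun H => orth_of_isSub (isSub_inc ω) h H, fun H => orth_of_isSub h (isSub_inc ω) H⟩

variable (c) in
/-- The predicate `ω` is `Z`-dense. -/
def D (Z : E) {T : E} (ω : T ⟶ c.Ω) : Prop :=
  ∀ ⦃T' : E⦄ (s : T' ⟶ T), Bij c Z (s ≫ ω)

variable {Z : E}

lemma D.pull {T T' : E} {ω : T ⟶ c.Ω} (h : D c Z ω) (s : T' ⟶ T) : D c Z (s ≫ ω) := by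
  intro T'' s'
  rw [← Category.assoc]
  exact h _

lemma isSub_id (T : E) : IsSub c (𝟙 T) (tr c T) :=
  ⟨inferInstance, by simp, fun t _ => ⟨t, by simp⟩⟩

lemma D_tr (T : E) : D c Z (tr c T) := by
  intro T' s
  rw [comp_tr, (isSub_id T').bij_iff]
  intro z
  exact ⟨z, by simp, fun y hy => by simpa using hy⟩

variable (c Z) in
/-- Sheaves for the class of `Z`-dense monomorphisms. -/
def Shf (C : E) : Prop := ∀ ⦃T : E⦄ (ω : T ⟶ c.Ω), D c Z ω → Bij c C ω

lemma shf_self : Shf c Z Z := fun _ ω h => by simpa using h (𝟙 _)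

lemma Bij.ext {C T : E} {ω : T ⟶ c.Ω} (hB : Bij c C ω) {f g : T ⟶ C}
    (h : ∀ ⦃T' : E⦄ (t : T' ⟶ T), t ≫ ω = tr c T' → t ≫ f = t ≫ g) : f = g :=
  (hB (inc c ω ≫ g)).unique (h _ (inc_tr ω)) rfl

lemma Shf.ext {C : E} (hC : Shf c Z C) {T : E} {ω : T ⟶ c.Ω} (hω : D c Z ω) {f g : T ⟶ C}
    (h : ∀ ⦃T' : E⦄ (t : T' ⟶ T), t ≫ ω = tr c T' → t ≫ f = t ≫ g) : f = g :=
  (hC ω hω).ext h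

lemma D_local_aux {T : E} {ω ω' : T ⟶ c.Ω} (h : D c Z ω) (h' : D c Z (inc c ω ≫ ω')) :
    Bij c Z ω' := by
  intro z
  have H : Shf c Z Z := shf_self
  obtain ⟨n, hn⟩ := (isSub_inc ω').lift (inc c (inc c ω ≫ ω') ≫ inc c ω)
    (by rw [Category.assoc, inc_tr])
  obtain ⟨z1, hz1, -⟩ := H _ h' (n ≫ z)
  obtain ⟨z2, hz2, -⟩ := H _ h z1
  refine ⟨z2, ?_, ?_⟩
  · refine H.ext (h.pull (inc c ω')) fun {T'} t ht => ?_
    rw [← Category.assoc] at ht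
    obtain ⟨l, hl⟩ := (isSub_inc ω).lift _ ht
    obtain ⟨k, hk⟩ := (isSub_inc (inc c ω ≫ ω')).lift l (by
      rw [← Category.assoc, hl, Category.assoc, inc_tr, comp_tr])
    have hkn : k ≫ n = t := by
      rw [← cancel_mono (inc c ω'), Category.assoc, hn, ← Category.assoc, hk, hl]
    rw [← Category.assoc, ← hl, Category.assoc, hz2, ← hk, Category.assoc, hz1,
      ← Category.assoc, hkn]
  · intro y hy
    refine H.ext h fun {T'} t ht => ?_
    obtain ⟨l, rfl⟩ := (isSub_inc ω).lift _ ht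
    rw [Category.assoc, Category.assoc, hz2]
    congr 1
    refine H.ext h' fun {T''} s hs => ?_
    obtain ⟨k, rfl⟩ := (isSub_inc (inc c ω ≫ ω')).lift s hs
    rw [Category.assoc, Category.assoc, hz1, ← hy, ← Category.assoc n, hn, Category.assoc]

lemma D.local {T : E} {ω ω' : T ⟶ c.Ω} (h : D c Z ω)
    (h' : ∀ ⦃T' : E⦄ (t : T' ⟶ T), t ≫ ω = tr c T' → D c Z (t ≫ ω')) : D c Z ω' := by
  intro T' s
  refine D_local_aux (h.pull s) ?_
  rw [← Category.assoc]
  exact h' _ (by rw [Category.assoc, inc_tr])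

lemma D.mono {T : E} {ω ω' : T ⟶ c.Ω} (h : D c Z ω)
    (h' : ∀ ⦃T' : E⦄ (t : T' ⟶ T), t ≫ ω = tr c T' → t ≫ ω' = tr c T') : D c Z ω' :=
  h.local fun _ t ht => by rw [h' t ht]; exact D_tr _

variable (c) in
/-- Equality predicate. -/
lemma exists_eqp (A : E) : ∃ δ : A ⊗ A ⟶ c.Ω, ∀ ⦃T : E⦄ (a b : T ⟶ A),
    lift a b ≫ δ = tr c T ↔ a = b := by
  obtain ⟨δ, h⟩ := rep_eq (c := c) (fst A A) (snd A A)
  exact ⟨δ, fun _ a b => by rw [h]; simp⟩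

variable (c) in
/-- The equality predicate of two maps. -/
noncomputable def eqp {A T : E} (a b : T ⟶ A) : T ⟶ c.Ω := lift a b ≫ (exists_eqp c A).choose

lemma eqp_iff {A T T' : E} (a b : T ⟶ A) (t : T' ⟶ T) :
    t ≫ eqp c a b = tr c T' ↔ t ≫ a = t ≫ b := by
  rw [eqp, ← Category.assoc, comp_lift, (exists_eqp c A).choose_spec]

lemma comp_eqp {A T T' : E} (a b : T ⟶ A) (t : T' ⟶ T) :
    t ≫ eqp c a b = eqp c (t ≫ a) (t ≫ b) := by
  simp [eqp, ← Category.assoc]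

lemma Shf.eq_of_D {C : E} (hC : Shf c Z C) {T : E} {f g : T ⟶ C} (h : D c Z (eqp c f g)) :
    f = g := hC.ext h fun _ t ht => (eqp_iff _ _ _).1 ht

variable [MonoidalClosed E]

/-- Extension of predicates along monomorphisms. -/
lemma exists_extend {V T : E} (m : V ⟶ T) (hm : Mono m) (w : V ⟶ c.Ω) :
    ∃ κ : T ⟶ c.Ω, m ≫ κ = w := by
  obtain ⟨κ, h⟩ := exists_char (c := c) (inc c w ≫ m) inferInstance
  refine ⟨κ, pext fun t => ?_⟩
  rw [← Category.assoc, h.iff]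
  constructor
  · rintro ⟨l, hl⟩
    rw [← Category.assoc, cancel_mono] at hl
    rw [← hl, Category.assoc, inc_tr, comp_tr]
  · intro ht
    obtain ⟨l, rfl⟩ := (isSub_inc w).lift t ht
    exact ⟨l, by simp⟩

variable (c) in
/-- The singleton map. -/
noncomputable def sing (A : E) : A ⟶ (ihom A).obj c.Ω :=
  MonoidalClosed.curry (exists_eqp c A).choose

lemma sing_inj {A T : E} {a b : T ⟶ A} (h : a ≫ sing c A = b ≫ sing c A) : a = b := by
  have hs : ∀ ⦃T : E⦄ (a b : T ⟶ A), lift a b ≫ (exists_eqp c A).choose = tr c T ↔ a = b :=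
    (exists_eqp c A).choose_spec
  simp only [sing, ← MonoidalClosed.curry_natural_left] at h
  replace h := MonoidalClosed.curry_injective h
  have h1 := congrArg (lift a (𝟙 T) ≫ ·) h
  simp only [← Category.assoc, lift_whiskerLeft, Category.id_comp] at h1
  rw [(hs a a).2 rfl] at h1
  exact (hs a b).1 h1.symm

instance mono_whisker {A V T : E} (m : V ⟶ T) [Mono m] : Mono (A ◁ m) := by
  refine ⟨fun f g h => ?_⟩
  apply CartesianMonoidalCategory.hom_ext
  · simpa using congrArg (· ≫ fst _ _) h
  · rw [← cancel_mono m]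
    simpa using congrArg (· ≫ snd _ _) h

lemma exists_extend_pow {A V T : E} (m : V ⟶ T) (hm : Mono m) (w : V ⟶ (ihom A).obj c.Ω) :
    ∃ κ : T ⟶ (ihom A).obj c.Ω, m ≫ κ = w := by
  obtain ⟨κ, h⟩ := exists_extend (A ◁ m) inferInstance (MonoidalClosed.uncurry w)
  refine ⟨MonoidalClosed.curry κ, ?_⟩
  rw [← MonoidalClosed.curry_natural_left, h, MonoidalClosed.curry_uncurry]

variable (c Z) in
/-- Uniqueness part of density. -/
def UD {T : E} (ω : T ⟶ c.Ω) : Prop :=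
  ∀ ⦃T' : E⦄ (s : T' ⟶ T) (z z' : T' ⟶ Z),
    (∀ ⦃T'' : E⦄ (s' : T'' ⟶ T'), s' ≫ s ≫ ω = tr c T'' → s' ≫ z = s' ≫ z') → z = z'

lemma rep_UD : Rep c (X := c.Ω) (fun {T} ω => UD c Z ω) := by
  have h1 : Rep c (X := c.Ω ⊗ (Z ⊗ Z)) (fun {T} x => x ≫ fst _ _ = tr c T) :=
    rep_true.pull (fst _ _)
  have h2 := rep_eq (c := c) (X := c.Ω ⊗ (Z ⊗ Z)) (snd _ _ ≫ fst _ _) (snd _ _ ≫ snd _ _)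
  refine (rep_forall (fst c.Ω (Z ⊗ Z)) (rep_imp (rep_imp h1 h2) h2)).congr fun {T} ω => ?_
  constructor
  · intro H T' s z z' h
    have := H s (lift (s ≫ ω) (lift z z')) (by simp) (𝟙 _) (fun s' hs' => by
      simp only [Category.id_comp, comp_lift, lift_fst, Category.assoc, lift_snd_assoc,
        lift_snd, lift_fst] at hs' ⊢
      exact h s' hs')
    simpa using this
  · intro H T' s q hq T'' s' hs'
    rw [← Category.assoc, ← Category.assoc (s' ≫ q)]
    refine H (s' ≫ s) _ _ fun {T3} t ht => ?_
    have := hs' t (by simpa [hq] using ht)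
    simpa using this

variable (c Z) in
/-- Existence part of density. -/
def ED {T : E} (ω : T ⟶ c.Ω) : Prop :=
  ∀ ⦃T' : E⦄ (s : T' ⟶ T) (S : T' ⟶ (ihom Z).obj c.Ω),
    (∀ ⦃T'' : E⦄ (s' : T'' ⟶ T'), s' ≫ s ≫ ω = tr c T'' → ∃ z, z ≫ sing c Z = s' ≫ S) →
    ∃ z : T' ⟶ Z, UD c Z (s ≫ ω) ∧
      (∀ ⦃T'' : E⦄ (s' : T'' ⟶ T'), s' ≫ s ≫ ω = tr c T'' → s' ≫ z ≫ sing c Z = s' ≫ S)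

lemma rep_ED : Rep c (X := c.Ω) (fun {T} ω => ED c Z ω) := by
  let P := (ihom Z).obj c.Ω
  have h1 : Rep c (X := c.Ω ⊗ P) (fun {T} x => x ≫ fst _ _ = tr c T) :=
    rep_true.pull (fst _ _)
  have h2 : Rep c (X := c.Ω ⊗ P) (fun {T} x => ∃ z, z ≫ sing c Z = x ≫ snd _ _) :=
    (rep_mono (c := c) (sing c Z) ⟨fun _ _ h => sing_inj h⟩).pull (snd _ _)
  have h3 : Rep c (X := (c.Ω ⊗ P) ⊗ Z)
    (fun {T} x => x ≫ fst _ _ ≫ fst _ _ = tr c T) :=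
    rep_true.pull (fst _ _ ≫ fst _ _)
  have h4 := rep_eq (c := c) (X := (c.Ω ⊗ P) ⊗ Z) (snd _ _ ≫ sing c Z) (fst _ _ ≫ snd _ _)
  have h5 := rep_and ((rep_UD (Z := Z)).pull (fst (c.Ω ⊗ P) Z ≫ fst _ _)) (rep_imp h3 h4)
  have h6 := rep_exists (c := c) (fst (c.Ω ⊗ P) Z) h5 (by
    rintro T q q' ⟨hq, hq1⟩ ⟨hq', hq1'⟩ hqq
    apply CartesianMonoidalCategory.hom_ext _ _ hqq
    refine hq (𝟙 _) _ _ fun {T'} t ht => ?_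
    apply sing_inj (c := c)
    have e1 := hq1 t (by simpa using ht)
    have e2 := hq1' t (by rw [Category.assoc, ← Category.assoc q', ← hqq]; simpa using ht)
    simp only [Category.assoc] at e1 e2 ⊢
    rw [e1, e2, ← Category.assoc q, hqq, Category.assoc])
  refine (rep_forall (fst c.Ω P) (rep_imp (rep_imp h1 h2) h6)).congr fun {T} ω => ?_
  constructor
  · intro H T' s S h
    obtain ⟨q, hq, hU, h'⟩ := H s (lift (s ≫ ω) S) (by simp) (𝟙 _) (fun s' hs' => by
      simp only [Category.id_comp, comp_lift, lift_fst, lift_snd] at hs' ⊢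
      exact h s' hs')
    rw [Category.id_comp] at hq
    refine ⟨q ≫ snd _ _, ?_, fun _ s' hs' => ?_⟩
    · rw [← Category.assoc, hq, lift_fst] at hU
      exact hU
    · have := h' s' (by rw [Category.assoc, ← Category.assoc q, hq, lift_fst]; exact hs')
      rw [Category.assoc, Category.assoc, ← Category.assoc q (fst _ _), hq, lift_snd] at this
      simpa using this
  · intro H T' s q hq T'' s' hs'
    obtain ⟨z, hz, h⟩ := H (s' ≫ s) (s' ≫ q ≫ snd _ _) (fun _ t ht => by
      obtain ⟨z, hz⟩ := hs' t (by simpa [hq] using ht)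
      exact ⟨z, by simpa using hz⟩)
    refine ⟨lift (s' ≫ q) z, by simp, ?_, fun t ht => ?_⟩
    · have e : lift (s' ≫ q) z ≫ fst _ _ ≫ fst _ _ = (s' ≫ s) ≫ ω := by simp [hq]
      rw [e]
      exact hz
    · have := h t (by simpa [hq] using ht)
      simpa using this

lemma D_iff {T : E} (ω : T ⟶ c.Ω) : D c Z ω ↔ UD c Z ω ∧ ED c Z ω := by
  constructor
  · intro h
    have hU : UD c Z ω := fun _ s z z' H => (h s).ext H
    refine ⟨hU, fun _ s S H => ?_⟩
    obtain ⟨z0, hz0⟩ := H (inc c (s ≫ ω)) (inc_tr _)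
    obtain ⟨z, hz, -⟩ := h s z0
    refine ⟨z, fun _ s' z z' H' => hU (s' ≫ s) z z' (fun _ t ht => H' t (by simpa using ht)), fun _ s' hs' => ?_⟩
    obtain ⟨l, rfl⟩ := (isSub_inc (s ≫ ω)).lift s' hs'
    rw [Category.assoc, Category.assoc, ← hz0, ← hz, Category.assoc]
  · rintro ⟨hU, hE⟩ T' s z0
    obtain ⟨S, hS⟩ := exists_extend_pow (c := c) (inc c (s ≫ ω)) inferInstance (z0 ≫ sing c Z)
    obtain ⟨z, -, hz⟩ := hE s S (fun _ s' hs' => by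
      obtain ⟨l, rfl⟩ := (isSub_inc (s ≫ ω)).lift s' hs'
      exact ⟨l ≫ z0, by rw [Category.assoc, Category.assoc, hS]⟩)
    refine ⟨z, ?_, fun y hy => ?_⟩
    · apply sing_inj (c := c)
      rw [Category.assoc, hz _ (inc_tr _), hS]
    · refine hU s _ _ fun _ s' hs' => ?_
      obtain ⟨l, rfl⟩ := (isSub_inc (s ≫ ω)).lift s' hs'
      apply sing_inj (c := c)
      have := hz _ (inc_tr (s ≫ ω))
      rw [hS] at this
      simp only [Category.assoc]
      rw [this, ← hy, Category.assoc]

lemma rep_D : Rep c (X := c.Ω) (fun {T} ω => D c Z ω) :=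
  (rep_and rep_UD rep_ED).congr fun ω => (D_iff ω).symm

variable (c Z) in
/-- The Lawvere–Tierney operator. -/
noncomputable def j : c.Ω ⟶ c.Ω := (rep_D (c := c) (Z := Z)).choose

lemma j_iff {T : E} (ω : T ⟶ c.Ω) : ω ≫ j c Z = tr c T ↔ D c Z ω :=
  (rep_D (c := c) (Z := Z)).choose_spec ω

lemma j_iff' {T T' : E} (t : T' ⟶ T) (ω : T ⟶ c.Ω) :
    t ≫ ω ≫ j c Z = tr c T' ↔ D c Z (t ≫ ω) := by
  rw [← Category.assoc, j_iff]

lemma j_j : j c Z ≫ j c Z = j c Z := by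
  apply pext
  intro T t
  rw [j_iff', j_iff]
  constructor
  · intro h
    refine h.local fun _ s hs => ?_
    rwa [j_iff'] at hs
  · intro h
    rw [(j_iff t).2 h]
    exact D_tr _

end dense

end PC

namespace PC
open CartesianMonoidalCategory

section sheaf

variable {E : Type u} [Category.{v} E] [CartesianMonoidalCategory E]
  [HasFiniteLimits E] [MonoidalClosed E] {c : _root_.Classifier E} {Z : E}

variable (c Z) in
/-- The object of closed truth values. -/
noncomputable def ΩJ : E := equalizer (j c Z) (𝟙 c.Ω)

variable (c Z) in
/-- The inclusion of the closed truth values. -/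
noncomputable def ιJ : ΩJ c Z ⟶ c.Ω := equalizer.ι (j c Z) (𝟙 c.Ω)

instance : Mono (ιJ c Z) := inferInstanceAs (Mono (equalizer.ι _ _))

lemma ιJ_j : ιJ c Z ≫ j c Z = ιJ c Z := by
  have := equalizer.condition (j c Z) (𝟙 c.Ω)
  rwa [Category.comp_id] at this

lemma exists_lift_J {T : E} (ω : T ⟶ c.Ω) (h : ω ≫ j c Z = ω) : ∃ l, l ≫ ιJ c Z = ω :=
  ⟨equalizer.lift ω (by simpa using h), equalizer.lift_ι _ _⟩

lemma closed_le {T : E} {ω κ₁ κ₂ : T ⟶ c.Ω} (h : D c Z ω) (h₂ : κ₂ ≫ j c Z = κ₂)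
    (he : inc c ω ≫ κ₁ = inc c ω ≫ κ₂) {T' : E} (t : T' ⟶ T) (ht : t ≫ κ₁ = tr c T') :
    t ≫ κ₂ = tr c T' := by
  rw [← h₂, j_iff']
  refine (h.pull t).mono fun _ s hs => ?_
  rw [← Category.assoc] at hs
  obtain ⟨l, hl⟩ := (isSub_inc ω).lift _ hs
  rw [← Category.assoc, ← hl, Category.assoc, ← he, ← Category.assoc, hl, Category.assoc, ht,
    comp_tr]

lemma shf_ΩJ : Shf c Z (ΩJ c Z) := by
  intro T ω h z
  have hz : (z ≫ ιJ c Z) ≫ j c Z = z ≫ ιJ c Z := by rw [Category.assoc, ιJ_j]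
  obtain ⟨κ, hκ⟩ := exists_extend (inc c ω) inferInstance (z ≫ ιJ c Z)
  obtain ⟨l, hl⟩ := exists_lift_J (Z := Z) (κ ≫ j c Z) (by rw [Category.assoc, j_j])
  refine ⟨l, ?_, fun y hy => ?_⟩
  · simp only
    rw [← cancel_mono (ιJ c Z), Category.assoc, hl, ← Category.assoc, hκ, hz]
  · rw [← cancel_mono (ιJ c Z), hl]
    have e : inc c ω ≫ y ≫ ιJ c Z = inc c ω ≫ κ ≫ j c Z := by
      rw [← Category.assoc, hy, ← Category.assoc, hκ, hz]
    apply pext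
    intro T' t
    exact ⟨closed_le h (by rw [Category.assoc, j_j]) e t,
      closed_le h (by rw [Category.assoc, ιJ_j]) e.symm t⟩

lemma shf_exp (A : E) {C : E} (hC : Shf c Z C) : Shf c Z ((ihom A).obj C) := by
  intro T ω h z
  have hs : IsSub c (A ◁ inc c ω) (snd A T ≫ ω) := by
    refine ⟨inferInstance, ?_, fun t ht => ?_⟩
    · rw [← Category.assoc, whiskerLeft_snd, Category.assoc, inc_tr, comp_tr]
    · rw [← Category.assoc] at ht
      obtain ⟨l, hl⟩ := (isSub_inc ω).lift _ ht
      refine ⟨lift (t ≫ fst _ _) l, ?_⟩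
      apply CartesianMonoidalCategory.hom_ext <;> simp [hl]
  obtain ⟨w, hw, hu⟩ := hs.bij_iff.1 (hC _ (h.pull (snd A T))) (MonoidalClosed.uncurry z)
  refine ⟨MonoidalClosed.curry w, ?_, fun y hy => ?_⟩
  · beta_reduce at hw ⊢
    rw [← MonoidalClosed.curry_natural_left, hw, MonoidalClosed.curry_uncurry]
  · rw [MonoidalClosed.eq_curry_iff]
    apply hu
    beta_reduce
    rw [← MonoidalClosed.uncurry_natural_left, hy]

lemma shf_closed {B : E} (hB : Shf c Z B) (κ : B ⟶ c.Ω) (hκ : κ ≫ j c Z = κ) :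
    Shf c Z (Sub c κ) := by
  intro T ω h z
  obtain ⟨w, hw, hu⟩ := hB _ h (z ≫ inc c κ)
  obtain ⟨l, hl⟩ := (isSub_inc κ).lift w (by
    rw [← hκ, j_iff']
    refine h.mono fun _ t ht => ?_
    obtain ⟨k, rfl⟩ := (isSub_inc ω).lift t ht
    rw [Category.assoc, ← Category.assoc _ w, hw, Category.assoc, inc_tr, comp_tr, comp_tr])
  refine ⟨l, ?_, fun y hy => ?_⟩
  · beta_reduce at hw ⊢
    rw [← cancel_mono (inc c κ), Category.assoc, hl, hw]
  · rw [← cancel_mono (inc c κ), hl]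
    apply hu
    beta_reduce
    rw [← Category.assoc, hy]

variable (c Z) in
/-- Locally surjective maps. -/
def DEpi {A B : E} (f : A ⟶ B) : Prop :=
  ∀ ⦃T : E⦄ (b : T ⟶ B) (ω : T ⟶ c.Ω),
    (∀ ⦃T' : E⦄ (s : T' ⟶ T) (a : T' ⟶ A), a ≫ f = s ≫ b → s ≫ ω = tr c T') → D c Z ω

variable (c Z) in
/-- Locally injective maps. -/
def DMono {A B : E} (f : A ⟶ B) : Prop :=
  ∀ ⦃T : E⦄ (a b : T ⟶ A), a ≫ f = b ≫ f → D c Z (eqp c a b)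

lemma orth {A Y : E} {f : A ⟶ Y} (he : DEpi c Z f) (hm : DMono c Z f) {C : E}
    (hC : Shf c Z C) (h : A ⟶ C) : ∃! g : Y ⟶ C, f ≫ g = h := by
  have h0 := rep_forall (c := c) (f ▷ C) (rep_eq (c := c) (fst A C ≫ h) (snd A C))
  have h1 : Rep c (X := Y ⊗ C) (fun {T} x => ∀ ⦃T' : E⦄ (s : T' ⟶ T) (a : T' ⟶ A),
      a ≫ f = s ≫ x ≫ fst _ _ → a ≫ h = s ≫ x ≫ snd _ _) := by
    refine h0.congr fun {T} x => ⟨?_, ?_⟩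
    · intro H T' s a ha
      have := H s (lift a (s ≫ x ≫ snd _ _)) (by
        apply CartesianMonoidalCategory.hom_ext <;> simp [ha])
      simpa using this
    · intro H T' s q hq
      have e1 := congrArg (· ≫ fst _ _) hq
      have e2 := congrArg (· ≫ snd _ _) hq
      simp only [Category.assoc, whiskerRight_fst, whiskerRight_snd] at e1 e2
      rw [e2, ← Category.assoc]
      exact H s _ (by simpa using e1)
  obtain ⟨γ, hγ⟩ := h1
  have hπ : Mono (inc c γ ≫ fst Y C) := by
    refine ⟨fun {T} a b hab => ?_⟩
    rw [← cancel_mono (inc c γ)]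
    have ha := (hγ (a ≫ inc c γ)).1 (by rw [Category.assoc, inc_tr, comp_tr])
    have hb := (hγ (b ≫ inc c γ)).1 (by rw [Category.assoc, inc_tr, comp_tr])
    apply CartesianMonoidalCategory.hom_ext
    · simpa using hab
    · refine hC.eq_of_D (he (a ≫ inc c γ ≫ fst _ _) _ fun _ s x hx => ?_)
      rw [eqp_iff, ← ha s x (by simpa using hx), ← hb s x (by rw [Category.assoc, ← hab]; exact hx)]
  obtain ⟨l, hl⟩ := (isSub_inc γ).lift (lift f h) (by
    rw [hγ]
    intro T' s a ha
    rw [lift_fst] at ha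
    rw [lift_snd]
    refine hC.ext (hm _ _ ha) fun _ t ht => ?_
    rw [eqp_iff] at ht
    rw [← Category.assoc, ht, Category.assoc])
  obtain ⟨ω, hω⟩ := exists_char (c := c) _ hπ
  have hD : D c Z ω := he (𝟙 _) _ fun _ s a ha => by
    rw [hω.iff]
    exact ⟨a ≫ l, by rw [Category.assoc, ← Category.assoc l, hl, lift_fst, ha, Category.comp_id]⟩
  obtain ⟨g, hg, -⟩ := hω.bij_iff.1 (hC _ hD) (inc c γ ≫ snd _ _)
  have e : f ≫ g = h := by
    have : l ≫ inc c γ ≫ fst _ _ = f := by rw [← Category.assoc, hl, lift_fst]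
    rw [← this, Category.assoc, hg, ← Category.assoc, hl, lift_snd]
  refine ⟨g, e, fun y hy => ?_⟩
  refine hC.eq_of_D (he (𝟙 _) _ fun _ s a ha => ?_)
  rw [Category.comp_id] at ha
  rw [eqp_iff, ← ha, Category.assoc, hy, Category.assoc, e]

lemma exists_sheafification (A : E) : ∃ (M : E) (η : A ⟶ M),
    Shf c Z M ∧ DEpi c Z η ∧ DMono c Z η := by
  obtain ⟨d, hd⟩ := exists_lift_J (Z := Z) ((exists_eqp c A).choose ≫ j c Z)
    (by rw [Category.assoc, j_j])
  let B := (ihom A).obj (ΩJ c Z)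
  have hB : Shf c Z B := shf_exp A shf_ΩJ
  let η : A ⟶ B := MonoidalClosed.curry d
  have hη : DMono c Z η := by
    intro T a b hab
    simp only [η, ← MonoidalClosed.curry_natural_left] at hab
    have h1 := congrArg (fun x => lift a (𝟙 T) ≫ x ≫ ιJ c Z) (MonoidalClosed.curry_injective hab)
    simp only [Category.assoc, hd] at h1
    simp only [← Category.assoc, lift_whiskerLeft, Category.id_comp] at h1
    have e : ∀ x y : T ⟶ A, lift x y ≫ (exists_eqp c A).choose = eqp c x y := fun _ _ => rfl
    rw [e, e] at h1
    rw [← j_iff, ← h1, j_iff]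
    have : eqp c a a = tr c T := by
      have := (eqp_iff (c := c) a a (𝟙 _)).2 rfl
      simpa using this
    rw [this]
    exact D_tr _
  have r1 := rep_forall (c := c) (η ▷ c.Ω) ((rep_true (c := c)).pull (snd A c.Ω))
  have r2 := (rep_D (c := c) (Z := Z)).pull (snd B c.Ω)
  have r3 : Rep c (X := B) (fun {T} b => ∀ ⦃T' : E⦄ (s : T' ⟶ T) (ω : T' ⟶ c.Ω),
      (∀ ⦃T'' : E⦄ (s' : T'' ⟶ T') (a : T'' ⟶ A), a ≫ η = s' ≫ s ≫ b → s' ≫ ω = tr c T'') →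
        D c Z ω) := by
    refine (rep_forall (fst B c.Ω) (rep_imp r1 r2)).congr fun {T} b => ⟨?_, ?_⟩
    · intro H T' s ω h
      have := H s (lift (s ≫ b) ω) (by simp) (𝟙 _) (fun {T''} s' q hq => by
        have e1 := congrArg (· ≫ fst _ _) hq
        have e2 := congrArg (· ≫ snd _ _) hq
        simp only [Category.assoc, whiskerRight_fst, whiskerRight_snd, Category.id_comp, lift_fst,
          lift_snd] at e1 e2
        rw [e2]
        exact h s' (q ≫ fst _ _) (by simpa using e1))
      rw [Category.id_comp, lift_snd] at this
      exact this
    · intro H T' s q hq T'' s' h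
      refine H (s' ≫ s) _ fun {T3} t a ha => ?_
      have := h t (lift a (t ≫ s' ≫ q ≫ snd _ _)) (by
        apply CartesianMonoidalCategory.hom_ext
        · simp [ha, hq]
        · simp)
      simpa using this
  obtain ⟨κ, hκ⟩ := r3
  have hcl : κ ≫ j c Z = κ := by
    apply pext
    intro T t
    rw [j_iff']
    constructor
    · intro h
      rw [hκ]
      intro T' s ω hω
      refine (h.pull s).local fun {T''} t' ht' => ?_
      rw [← Category.assoc, ← Category.assoc, hκ] at ht'
      have := ht' (𝟙 _) (t' ≫ ω) (fun _ s' a ha => by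
        rw [← Category.assoc]
        exact hω _ a (by simpa using ha))
      exact this
    · intro h
      rw [h]
      exact D_tr _
  obtain ⟨η', hη'⟩ := (isSub_inc κ).lift η (by
    rw [hκ]
    intro T' s ω h
    have := h (𝟙 _) s (by simp)
    rw [Category.id_comp] at this
    rw [this]
    exact D_tr _)
  refine ⟨Sub c κ, η', shf_closed hB κ hcl, ?_, ?_⟩
  · intro T b ω h
    refine (hκ (b ≫ inc c κ)).1 (by rw [Category.assoc, inc_tr, comp_tr]) (𝟙 _) ω
      fun _ s a ha => h s a ?_
    rw [← cancel_mono (inc c κ), Category.assoc, hη']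
    simpa using ha
  · intro T a b hab
    refine hη a b ?_
    rw [← hη', ← Category.assoc, hab, Category.assoc]

/-- Composition of locally surjective maps. -/
lemma DEpi.of_local {P Q : E} (f : P ⟶ Q)
    (h : ∀ ⦃T : E⦄ (t : T ⟶ Q), ∃ (T' : E) (e : T' ⟶ T) (p : T' ⟶ P), DEpi c Z e ∧
      p ≫ f = e ≫ t) : DEpi c Z f := by
  intro T b ω hω
  obtain ⟨T', e, p, he, hp⟩ := h b
  refine he (𝟙 _) ω fun _ s a ha => ?_
  rw [Category.comp_id] at ha
  refine hω s (a ≫ p) ?_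
  rw [Category.assoc, hp, ← ha, Category.assoc]

lemma DEpi.comp {P Q R : E} {f : P ⟶ Q} {g : Q ⟶ R} (hf : DEpi c Z f) (hg : DEpi c Z g) :
    DEpi c Z (f ≫ g) := by
  intro T b ω h
  rw [← j_iff]
  have hD : D c Z (ω ≫ j c Z) := hg b _ fun {T'} s a ha => by
    rw [j_iff']
    refine hf a _ fun {T''} s' p hp => ?_
    rw [← Category.assoc]
    refine h _ p ?_
    rw [← Category.assoc, hp, Category.assoc, ha, Category.assoc]
  rw [← j_iff, Category.assoc, j_j] at hD
  exact hD

lemma DEpi.pullback {P Q R : E} {f : P ⟶ Q} (hf : DEpi c Z f) (g : R ⟶ Q) :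
    DEpi c Z (pullback.snd f g) := by
  intro T b ω h
  refine hf (b ≫ g) ω fun _ s a ha => ?_
  exact h s (Limits.pullback.lift a (s ≫ b) (by rw [ha, Category.assoc])) (Limits.pullback.lift_snd _ _ _)

lemma DEpi.inc {T : E} {ω : T ⟶ c.Ω} (h : D c Z ω) : DEpi c Z (inc c ω) := by
  intro T' b ω' h'
  refine (h.pull b).mono fun _ t ht => ?_
  rw [← Category.assoc] at ht
  obtain ⟨l, hl⟩ := (isSub_inc ω).lift _ ht
  exact h' t l hl

/-- The comparison map to a pullback of sheafifications. -/
lemma lex_core {A B C P KA KB KC Q : E} {f : A ⟶ C} {g : B ⟶ C} {p₁ : P ⟶ A} {p₂ : P ⟶ B}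
    (hP : IsPullback p₁ p₂ f g) {kf : KA ⟶ KC} {kg : KB ⟶ KC} {q₁ : Q ⟶ KA} {q₂ : Q ⟶ KB}
    (hQ : IsPullback q₁ q₂ kf kg) {ηA : A ⟶ KA} {ηB : B ⟶ KB} {ηC : C ⟶ KC}
    (hf : f ≫ ηC = ηA ≫ kf) (hg : g ≫ ηC = ηB ≫ kg)
    (eA : DEpi c Z ηA) (mA : DMono c Z ηA) (eB : DEpi c Z ηB) (mB : DMono c Z ηB)
    (mC : DMono c Z ηC) (k : P ⟶ Q) (hk₁ : k ≫ q₁ = p₁ ≫ ηA) (hk₂ : k ≫ q₂ = p₂ ≫ ηB) :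
    DEpi c Z k ∧ DMono c Z k := by
  constructor
  · refine DEpi.of_local _ fun {T} t => ?_
    let e₁ := pullback.snd ηA (t ≫ q₁)
    let e₂ := pullback.snd ηB (e₁ ≫ t ≫ q₂)
    let a := e₂ ≫ pullback.fst ηA (t ≫ q₁)
    let b := pullback.fst ηB (e₁ ≫ t ≫ q₂)
    have ha : a ≫ ηA = e₂ ≫ e₁ ≫ t ≫ q₁ := by
      simp only [a, Category.assoc, pullback.condition, e₁]
    have hb : b ≫ ηB = e₂ ≫ e₁ ≫ t ≫ q₂ := pullback.condition
    clear_value a b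
    have hab : (a ≫ f) ≫ ηC = (b ≫ g) ≫ ηC := by
      rw [Category.assoc, Category.assoc, hf, hg, ← Category.assoc a, ha, ← Category.assoc b, hb]
      simp only [Category.assoc, hQ.w]
    have hD := mC _ _ hab
    let e₃ := inc c (eqp c (a ≫ f) (b ≫ g))
    have he₃ : e₃ ≫ a ≫ f = e₃ ≫ b ≫ g := (eqp_iff _ _ _).1 (inc_tr _)
    refine ⟨_, e₃ ≫ e₂ ≫ e₁, hP.lift (e₃ ≫ a) (e₃ ≫ b) (by simpa using he₃),
      (DEpi.inc hD).comp ((eB.pullback _).comp (eA.pullback _)), ?_⟩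
    apply hQ.hom_ext
    · simp only [Category.assoc, hk₁, IsPullback.lift_fst_assoc, ha]
    · simp only [Category.assoc, hk₂, IsPullback.lift_snd_assoc, hb]
  · intro T a b hab
    have h1 : D c Z (eqp c (a ≫ p₁) (b ≫ p₁)) := mA _ _ (by
      rw [Category.assoc, Category.assoc, ← hk₁, ← Category.assoc, hab, Category.assoc])
    have h2 : D c Z (eqp c (a ≫ p₂) (b ≫ p₂)) := mB _ _ (by
      rw [Category.assoc, Category.assoc, ← hk₂, ← Category.assoc, hab, Category.assoc])
    refine h1.local fun _ t ht => (h2.pull t).mono fun _ s hs => ?_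
    rw [eqp_iff] at ht
    rw [← Category.assoc, eqp_iff] at hs ⊢
    apply hP.hom_ext
    · simp only [Category.assoc] at ht ⊢
      rw [ht]
    · simpa using hs

lemma shf_pullback {A B C P : E} {f : A ⟶ C} {g : B ⟶ C} {p₁ : P ⟶ A} {p₂ : P ⟶ B}
    (hP : IsPullback p₁ p₂ f g) (hA : Shf c Z A) (hB : Shf c Z B) (hC : Shf c Z C) :
    Shf c Z P := by
  intro T ω h z
  obtain ⟨a, ha, hau⟩ := hA _ h (z ≫ p₁)
  obtain ⟨b, hb, hbu⟩ := hB _ h (z ≫ p₂)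
  beta_reduce at ha hb
  have hab : a ≫ f = b ≫ g := by
    refine ((hC _ h) (z ≫ p₁ ≫ f)).unique ?_ ?_
    · rw [← Category.assoc, ha, Category.assoc]
    · rw [← Category.assoc, hb, Category.assoc, hP.w]
  refine ⟨hP.lift a b hab, ?_, fun y hy => ?_⟩
  · apply hP.hom_ext
    · simp [ha]
    · simp [hb]
  · apply hP.hom_ext
    · rw [hP.lift_fst]; exact hau _ (by simp [← hy])
    · rw [hP.lift_snd]; exact hbu _ (by simp [← hy])

lemma shf_terminal {C : E} (hC : IsTerminal C) : Shf c Z C := fun _ _ _ _ =>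
  ⟨hC.from _, hC.hom_ext _ _, fun _ _ => hC.hom_ext _ _⟩

lemma shf_iso {C C' : E} (e : C ≅ C') (hC : Shf c Z C) : Shf c Z C' := by
  intro T ω h z
  obtain ⟨w, hw, hu⟩ := hC _ h (z ≫ e.inv)
  beta_reduce at hw
  refine ⟨w ≫ e.hom, ?_, fun y hy => ?_⟩
  · simp only
    rw [← Category.assoc, hw]; simp
  · rw [← Iso.comp_inv_eq]
    exact hu _ (by simp [← hy])

end sheaf

end PC

namespace PC
open CartesianMonoidalCategory

section refl

variable {E : Type u} [Category.{v} E] {F : Type u₂} [Category.{v₂} F] {iF : F ⥤ E} {LF : E ⥤ F}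

lemma orth_LF (adjF : LF ⊣ iF) {C : E} (hC : IsIso (adjF.unit.app C)) {V Y : E} (w : V ⟶ Y)
    (hw : IsIso (LF.map w)) (z : V ⟶ C) : ∃! z' : Y ⟶ C, w ≫ z' = z := by
  refine ⟨adjF.unit.app Y ≫ iF.map (inv (LF.map w) ≫ LF.map z) ≫ inv (adjF.unit.app C), ?_, ?_⟩
  · have h1 := adjF.unit.naturality w
    have h2 := adjF.unit.naturality z
    simp only [Functor.id_obj, Functor.id_map, Functor.comp_obj, Functor.comp_map] at h1 h2
    beta_reduce
    rw [← Category.assoc, h1, Category.assoc, ← Category.assoc (iF.map _), ← iF.map_comp,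
      IsIso.hom_inv_id_assoc, ← Category.assoc, ← h2, Category.assoc, IsIso.hom_inv_id,
      Category.comp_id]
  · intro y hy
    have h2 := adjF.unit.naturality y
    simp only [Functor.id_obj, Functor.id_map, Functor.comp_obj, Functor.comp_map] at h2
    rw [← hy, LF.map_comp, IsIso.inv_hom_id_assoc, ← Category.assoc, ← h2, Category.assoc,
      IsIso.hom_inv_id, Category.comp_id]

lemma iso_LF (adjF : LF ⊣ iF) {U X : E} (u : U ⟶ X)
    (h : ∀ (A : F) (z : U ⟶ iF.obj A), ∃! z' : X ⟶ iF.obj A, u ≫ z' = z) : IsIso (LF.map u) := by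
  rw [isIso_iff_coyoneda_map_bijective]
  intro A
  constructor
  · intro x y hxy
    apply (adjF.homEquiv _ _).injective
    refine (h A _).unique rfl ?_
    beta_reduce at hxy ⊢
    rw [← adjF.homEquiv_naturality_left, ← adjF.homEquiv_naturality_left, hxy]
  · intro z
    obtain ⟨y, hy, -⟩ := h A (adjF.homEquiv _ _ z)
    refine ⟨(adjF.homEquiv _ _).symm y, ?_⟩
    beta_reduce
    rw [← adjF.homEquiv_naturality_left_symm, hy, Equiv.symm_apply_apply]

end refl

section S

variable {S : Type u'} [Category.{v'} S] [HasFiniteLimits S] [CartesianMonoidalCategory S]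
  {c : _root_.Classifier S}

lemma iso_S {A B : S} (f : A ⟶ B) (h1 : ∀ x y : B ⟶ c.Ω, f ≫ x = f ≫ y → x = y)
    (h2 : ∀ x : A ⊗ A ⟶ c.Ω, ∃ y : B ⊗ A ⟶ c.Ω, (f ▷ A) ≫ y = x) : IsIso f := by
  obtain ⟨δ, hδ⟩ := exists_eqp c A
  obtain ⟨ρ, hρ⟩ := h2 δ
  have hm : Mono f := by
    refine ⟨fun {T} a b hab => ?_⟩
    rw [← hδ, ← hρ, ← Category.assoc, lift_whiskerRight, hab, ← lift_whiskerRight, Category.assoc,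
      hρ, hδ]
  obtain ⟨χ, hχ⟩ := exists_char (c := c) f hm
  have : χ = tr c B := h1 _ _ (by rw [hχ.tr, comp_tr])
  obtain ⟨l, hl⟩ := hχ.lift (𝟙 B) (by rw [this, comp_tr])
  exact ⟨l, by rw [← cancel_mono f, Category.assoc, hl]; simp, hl⟩

end S

section lex

variable {E : Type u} [Category.{v} E] [CartesianMonoidalCategory E]
  [HasFiniteLimits E] [MonoidalClosed E] {c : _root_.Classifier E} {Z : E}

lemma iso_of_orth {P M N : E} (hM : Shf c Z M) (hN : Shf c Z N) {f : P ⟶ M} {g : P ⟶ N}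
    (ef : DEpi c Z f) (mf : DMono c Z f) (eg : DEpi c Z g) (mg : DMono c Z g) (k : M ⟶ N)
    (hk : f ≫ k = g) : IsIso k := by
  obtain ⟨l, hl, -⟩ := orth eg mg hM f
  beta_reduce at hl
  refine ⟨l, (orth ef mf hM f).unique ?_ ?_, (orth eg mg hN g).unique ?_ ?_⟩
  · rw [← Category.assoc, hk, hl]
  · simp
  · rw [← Category.assoc, hl, hk]
  · simp

lemma DEpi.of_isIso {A B : E} (f : A ⟶ B) [IsIso f] : DEpi c Z f := by
  intro T b ω h
  have := h (𝟙 _) (b ≫ inv f) (by simp)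
  rw [Category.id_comp] at this
  rw [this]
  exact D_tr _

lemma eqp_self {A T : E} (a : T ⟶ A) : eqp c a a = tr c T := by
  have := (eqp_iff (c := c) a a (𝟙 _)).2 rfl
  simpa using this

lemma DMono.of_mono {A B : E} (f : A ⟶ B) [Mono f] : DMono c Z f := by
  intro T a b h
  rw [cancel_mono] at h
  rw [h, eqp_self]
  exact D_tr _

lemma DMono.comp_mono {A B C : E} {f : A ⟶ B} (h : DMono c Z f) (g : B ⟶ C) [Mono g] :
    DMono c Z (f ≫ g) := by
  intro T a b hab
  rw [← Category.assoc, ← Category.assoc, cancel_mono] at hab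
  exact h a b hab

variable {F' : Type u₂} [Category.{v₂} F'] (i' : F' ⥤ E) [i'.Full] [i'.Faithful]

lemma lex_adj {L' : E ⥤ F'} (adj : L' ⊣ i') (hS : ∀ B, Shf c Z (i'.obj B))
    (he : ∀ A, DEpi c Z (adj.unit.app A)) (hm : ∀ A, DMono c Z (adj.unit.app A)) :
    PreservesFiniteLimits L' := by
  have ht : PreservesLimitsOfShape (Discrete PEmpty.{1}) L' := by
    have : IsIso (adj.unit.app (⊤_ E)) :=
      iso_of_orth (c := c) (Z := Z) (shf_terminal terminalIsTerminal) (hS _) (f := 𝟙 _)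
        (DEpi.of_isIso _) (DMono.of_mono _) (he _) (hm _) _ (Category.id_comp _)
    have h1 : IsTerminal (i'.obj (L'.obj (⊤_ E))) :=
      terminalIsTerminal.ofIso (asIso (adj.unit.app (⊤_ E)))
    have h2 : IsTerminal (L'.obj (⊤_ E)) := IsTerminal.isTerminalOfObj i' _ h1
    have := preservesLimit_of_preserves_limit_cone (F := L') terminalIsTerminal
      ((isLimitMapConeEmptyConeEquiv L' (⊤_ E)).symm h2)
    exact preservesLimitsOfShape_pempty_of_preservesTerminal L'
  have hp : PreservesLimitsOfShape WalkingCospan L' := by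
    refine ⟨fun {K} => ?_⟩
    suffices PreservesLimit (cospan (K.map WalkingCospan.Hom.inl) (K.map WalkingCospan.Hom.inr)) L'
      from preservesLimit_of_iso_diagram L' (diagramIsoCospan K).symm
    set f := K.map WalkingCospan.Hom.inl
    set g := K.map WalkingCospan.Hom.inr
    have hP := IsPullback.of_hasPullback f g
    have hQ := IsPullback.of_hasPullback (i'.map (L'.map f)) (i'.map (L'.map g))
    have w : i'.map (L'.map (pullback.fst f g)) ≫ i'.map (L'.map f) =
      i'.map (L'.map (pullback.snd f g)) ≫ i'.map (L'.map g) := by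
      simp only [← Functor.map_comp, pullback.condition]
    have nat : ∀ {X Y : E} (h : X ⟶ Y), h ≫ adj.unit.app Y = adj.unit.app X ≫ i'.map (L'.map h) :=
      fun h => adj.unit.naturality h
    have hc := lex_core hP hQ (nat f) (nat g) (he _) (hm _) (he _) (hm _) (hm _)
      (adj.unit.app _ ≫ hQ.lift _ _ w) (by rw [Category.assoc, hQ.lift_fst, nat]; rfl)
      (by rw [Category.assoc, hQ.lift_snd, nat]; rfl)
    have hiso : IsIso (hQ.lift _ _ w) := iso_of_orth (hS _)
      (shf_pullback hQ (hS _) (hS _) (hS _)) (he _) (hm _) hc.1 hc.2 _ rfl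
    have h3 : IsPullback (i'.map (L'.map (pullback.fst f g))) (i'.map (L'.map (pullback.snd f g)))
        (i'.map (L'.map f)) (i'.map (L'.map g)) :=
      IsPullback.of_iso_pullback ⟨w⟩ (asIso (hQ.lift _ _ w)) (hQ.lift_fst _ _ _) (hQ.lift_snd _ _ _)
    have h4 : IsPullback (L'.map (pullback.fst f g)) (L'.map (pullback.snd f g))
        (L'.map f) (L'.map g) := IsPullback.of_map i' (by
          simp only [← Functor.map_comp, pullback.condition]) h3
    exact hP.preservesLimit_cospan_iff.2 h4
  exact preservesFiniteLimits_of_preservesTerminal_and_pullbacks L'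

lemma exists_left_adjoint (hS : ∀ B, Shf c Z (i'.obj B))
    (hr : ∀ A : E, ∃ (N : F') (θ : A ⟶ i'.obj N), DEpi c Z θ ∧ DMono c Z θ) :
    ∃ (L' : E ⥤ F') (adj : L' ⊣ i'), PreservesFiniteLimits L' ∧
      ∀ C, Shf c Z C → IsIso (adj.unit.app C) := by
  choose N θ he hm using hr
  let e : ∀ (X : E) (Y : F'), (N X ⟶ Y) ≃ (X ⟶ i'.obj Y) := fun X Y =>
    Equiv.ofBijective (fun g => θ X ≫ i'.map g) (by
      constructor
      · intro g g' h
        exact i'.map_injective ((orth (he X) (hm X) (hS Y) _).unique h rfl)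
      · intro y
        obtain ⟨g, hg, -⟩ := orth (he X) (hm X) (hS Y) y
        exact ⟨i'.preimage g, by simpa using hg⟩)
  have hee : ∀ X Y (g : N X ⟶ Y), e X Y g = θ X ≫ i'.map g := fun _ _ _ => rfl
  have hnat : ∀ X Y Y' (g : Y ⟶ Y') (h : N X ⟶ Y), e X Y' (h ≫ g) = e X Y h ≫ i'.map g := by
    intro X Y Y' g h
    simp [hee]
  let adj := Adjunction.adjunctionOfEquivLeft e hnat
  have hu : ∀ X, adj.unit.app X = θ X := by
    intro X
    simp only [adj, Adjunction.adjunctionOfEquivLeft_unit_app, hee]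
    exact (congrArg _ (i'.map_id _)).trans (Category.comp_id _)
  have he' : ∀ A, DEpi c Z (adj.unit.app A) := fun A => by rw [hu]; exact he A
  have hm' : ∀ A, DMono c Z (adj.unit.app A) := fun A => by rw [hu]; exact hm A
  refine ⟨_, adj, lex_adj i' adj hS he' hm', fun C hC => ?_⟩
  exact iso_of_orth hC (hS _) (f := 𝟙 _)
        (DEpi.of_isIso _) (DMono.of_mono _) (he' _) (hm' _) _ (Category.id_comp _)

end lex

end PC

namespace PC
open CartesianMonoidalCategory

section final

variable {E : Type u} [Category.{v} E]

lemma adj_orth {S : Type u'} [Category.{v'} S] {L : E ⥤ S} {R : S ⥤ E} (adj : L ⊣ R) {V Y : E}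
    (w : V ⟶ Y) (C : S) : (∀ z : V ⟶ R.obj C, ∃! z' : Y ⟶ R.obj C, w ≫ z' = z) ↔
      ∀ z : L.obj V ⟶ C, ∃! z' : L.obj Y ⟶ C, L.map w ≫ z' = z := by
  constructor
  · intro h z
    obtain ⟨y, hy, hu⟩ := h (adj.homEquiv _ _ z)
    beta_reduce at hy hu
    refine ⟨(adj.homEquiv _ _).symm y, ?_, fun y' hy' => ?_⟩
    · beta_reduce
      rw [← adj.homEquiv_naturality_left_symm, hy, Equiv.symm_apply_apply]
    · rw [Equiv.eq_symm_apply]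
      apply hu
      rw [← adj.homEquiv_naturality_left, hy']
  · intro h z
    obtain ⟨y, hy, hu⟩ := h ((adj.homEquiv _ _).symm z)
    beta_reduce at hy hu
    refine ⟨adj.homEquiv _ _ y, ?_, fun y' hy' => ?_⟩
    · beta_reduce
      rw [← adj.homEquiv_naturality_left, hy, Equiv.apply_symm_apply]
    · rw [← Equiv.symm_apply_eq]
      apply hu
      rw [← adj.homEquiv_naturality_left_symm, hy']

lemma orth_of_isIso {V Y : E} (w : V ⟶ Y) [IsIso w] (C : E) (z : V ⟶ C) :
    ∃! z' : Y ⟶ C, w ≫ z' = z :=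
  ⟨inv w ≫ z, by simp, fun y hy => by simp [← hy]⟩

variable [CartesianMonoidalCategory E]

lemma isPullback_whisker {V Y : E} (v : V ⟶ Y) (W : E) :
    IsPullback (fst V W) (v ▷ W) v (fst Y W) := by
  refine ⟨⟨by simp⟩, ⟨PullbackCone.IsLimit.mk _
    (fun s => lift s.fst (s.snd ≫ snd _ _)) ?_ ?_ ?_⟩⟩
  · intro s; simp
  · intro s
    apply CartesianMonoidalCategory.hom_ext
    · simpa using s.condition
    · simp
  · intro s m h1 h2
    apply CartesianMonoidalCategory.hom_ext
    · simpa using h1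
    · simp [← h2]

variable [HasFiniteLimits E] {c : _root_.Classifier E} {Z : E}

lemma mono_of_isPullback {U X V Y : E} {m : U ⟶ X} (h : Mono m) {a : V ⟶ U}
    {v : V ⟶ Y} {b : Y ⟶ X} (hp : IsPullback a v m b) : Mono v := by
  refine ⟨fun x y hxy => hp.hom_ext ?_ hxy⟩
  rw [← cancel_mono m, Category.assoc, Category.assoc, hp.w, ← Category.assoc, hxy,
    Category.assoc]

lemma IsSub.pull {U X V Y : E} {m : U ⟶ X} {ω : X ⟶ c.Ω} (h : IsSub c m ω) {a : V ⟶ U}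
    {v : V ⟶ Y} {b : Y ⟶ X} (hp : IsPullback a v m b) : IsSub c v (b ≫ ω) := by
  refine ⟨mono_of_isPullback h.mono hp, ?_, fun t ht => ?_⟩
  · rw [← Category.assoc, ← hp.w, Category.assoc, h.tr, comp_tr]
  · rw [← Category.assoc] at ht
    obtain ⟨l, hl⟩ := h.lift _ ht
    exact ⟨hp.lift l t hl, hp.lift_snd _ _ _⟩

variable [MonoidalClosed E] {F : Type u₂} [Category.{v₂} F] {iF : F ⥤ E} {LF : E ⥤ F}
  [PreservesFiniteLimits LF]

lemma iso_pull {U X V Y : E} {m : U ⟶ X} (hm : IsIso (LF.map m)) {a : V ⟶ U}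
    {v : V ⟶ Y} {b : Y ⟶ X} (hp : IsPullback a v m b) : IsIso (LF.map v) :=
  (hp.map LF).isIso_snd_of_isIso

lemma dense_D (adjF : LF ⊣ iF) (hZ : IsIso (adjF.unit.app Z)) {U X : E} {m : U ⟶ X}
    {ω : X ⟶ c.Ω} (h : IsSub c m ω) (hm : IsIso (LF.map m)) : D c Z ω := by
  intro T s
  have hp := IsPullback.of_hasPullback m s
  rw [(h.pull hp).bij_iff]
  exact orth_LF adjF hZ _ (iso_pull hm hp)

lemma shf_mem [iF.Full] [iF.Faithful] (adjF : LF ⊣ iF) (hZ : IsIso (adjF.unit.app Z)) {A : E}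
    (hA : Shf c Z A) : IsIso (adjF.unit.app A) := by
  have key : ∀ {U X : E} (m : U ⟶ X), Mono m → IsIso (LF.map m) → ∀ z : U ⟶ A,
      ∃! z' : X ⟶ A, m ≫ z' = z := by
    intro U X m hm hi
    obtain ⟨ω, h⟩ := exists_char (c := c) m hm
    exact h.bij_iff.1 (hA ω (dense_D adjF hZ h hi))
  have hmono : Mono (adjF.unit.app A) := by
    refine ⟨fun {T} a b hab => ?_⟩
    have hab' : LF.map a = LF.map b := by
      apply (adjF.homEquiv _ _).injective
      rw [adjF.homEquiv_unit, adjF.homEquiv_unit]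
      exact (adjF.unit.naturality a).symm.trans (hab.trans (adjF.unit.naturality b))
    have hi : IsIso (LF.map (equalizer.ι a b)) :=
      isIso_limit_cone_parallelPair_of_eq hab'
        (isLimitForkMapOfIsLimit LF (equalizer.condition a b) (equalizerIsEqualizer a b))
    exact (key (equalizer.ι a b) inferInstance hi _).unique rfl (equalizer.condition a b).symm
  have hL : IsIso (LF.map (adjF.unit.app A)) := by
    have := adjF.left_triangle_components A
    have h2 : IsIso (LF.map (adjF.unit.app A) ≫ adjF.counit.app (LF.obj A)) := by
      rw [this]
      exact inferInstanceAs (IsIso (𝟙 (LF.obj A)))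
    exact IsIso.of_isIso_comp_right _ (adjF.counit.app (LF.obj A))
  obtain ⟨r, hr, -⟩ := key _ hmono hL (𝟙 _)
  beta_reduce at hr
  refine ⟨r, hr, (orth_LF adjF (Adjunction.isIso_unit_app_of_iso adjF (Iso.refl _)) _ hL
    (adjF.unit.app A)).unique ?_ ?_⟩
  · rw [← Category.assoc, hr]; simp
  · exact Category.comp_id _

end final

end PC
/-- Let `p : E ⟶ S` be a pre-cohesive geometric morphism between elementary
toposes, `2 = cS.Ω` the subobject classifier of `S`, and `F` (inclusion `iF`, reflector
`LF ⊣ iF` preserving finite limits) the least subtopos of `E` containing `p^* 2`.  A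
monomorphism `u : U ⟶ X` in `E` is `F`-dense (i.e. `LF.map u` is an isomorphism) if and
only if for every pullback square with `u` on one side and `v : V ⟶ Y` as the pulled-back
monomorphism, `p_! v` is an isomorphism in `S`. -/
theorem precohesive_dense_iff_pullbacks_pi_iso
    {E : Type u} [Category.{v} E] [HasFiniteLimits E] [CartesianMonoidalCategory E]
    [MonoidalClosed E] (cE : _root_.Classifier E)
    {S : Type u'} [Category.{v'} S] [HasFiniteLimits S] [CartesianMonoidalCategory S]
    [MonoidalClosed S] (cS : _root_.Classifier S)
    (pShriek : E ⥤ S) (pStar : S ⥤ E) (pLower : E ⥤ S) (pUpper : S ⥤ E)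
    (adj₁ : pShriek ⊣ pStar) (adj₂ : pStar ⊣ pLower) (adj₃ : pLower ⊣ pUpper)
    [PreservesFiniteLimits pStar] [pStar.Full] [pStar.Faithful]
    (hUnitMono : ∀ A : S, Mono (adj₂.unit.app A))
    (hCounitMono : ∀ X : E, Mono (adj₂.counit.app X))
    [PreservesFiniteProducts pShriek]
    {F : Type u₂} [Category.{v₂} F] (iF : F ⥤ E) [iF.Full] [iF.Faithful]
    (LF : E ⥤ F) (adjF : LF ⊣ iF) [PreservesFiniteLimits LF]
    (hZ : IsIso (adjF.unit.app (pStar.obj cS.Ω)))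
    (hleast : ∀ {F' : Type u₂} [Category.{v₂} F'] (i' : F' ⥤ E), i'.Full → i'.Faithful →
      ∀ (L' : E ⥤ F') (adj' : L' ⊣ i'), PreservesFiniteLimits L' →
      IsIso (adj'.unit.app (pStar.obj cS.Ω)) →
      ∀ X : E, IsIso (adjF.unit.app X) → IsIso (adj'.unit.app X))
    {U X : E} (u : U ⟶ X) (hu : Mono u) :
    IsIso (LF.map u) ↔
      ∀ {V Y : E} (v : V ⟶ Y) (a : V ⟶ U) (b : Y ⟶ X),
        IsPullback a v u b → IsIso (pShriek.map v) := by
  constructor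
  · intro hL V Y v a b hp
    have hv : IsIso (LF.map v) := PC.iso_pull hL hp
    have hw : IsIso (LF.map (v ▷ V)) := PC.iso_pull hv (PC.isPullback_whisker v V)
    have o1 := (PC.adj_orth adj₁ v cS.Ω).1 (PC.orth_LF adjF hZ v hv)
    have o2 := (PC.adj_orth adj₁ (v ▷ V) cS.Ω).1 (PC.orth_LF adjF hZ _ hw)
    refine PC.iso_S (c := cS) _ (fun x y hxy => (o1 _).unique hxy rfl) fun x => ?_
    obtain ⟨y, hy, -⟩ := o2 (CartesianMonoidalCategory.prodComparison pShriek V V ≫ x)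
    beta_reduce at hy
    refine ⟨inv (CartesianMonoidalCategory.prodComparison pShriek Y V) ≫ y, ?_⟩
    rw [← cancel_epi (CartesianMonoidalCategory.prodComparison pShriek V V), ← hy,
      ← CartesianMonoidalCategory.prodComparison_natural_whiskerRight_assoc,
      IsIso.hom_inv_id_assoc]
  · intro H
    let Z := pStar.obj cS.Ω
    let P : ObjectProperty F := fun B => PC.Shf cE Z (iF.obj B)
    obtain ⟨L', adj', hlex, hiso⟩ := PC.exists_left_adjoint (c := cE) (Z := Z) (P.ι ⋙ iF)
      (fun B => B.property) (fun A => by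
        obtain ⟨M, η, hM, he, hm⟩ := PC.exists_sheafification (c := cE) (Z := Z) A
        have hi := PC.shf_mem adjF hZ hM
        exact ⟨⟨LF.obj M, PC.shf_iso (asIso (adjF.unit.app M)) hM⟩, η ≫ adjF.unit.app M,
          he.comp (PC.DEpi.of_isIso _), hm.comp_mono _⟩)
    have hF : ∀ A : F, PC.Shf cE Z (iF.obj A) := by
      intro A
      have := hleast (P.ι ⋙ iF) inferInstance inferInstance L' adj' hlex (hiso _ PC.shf_self)
        (iF.obj A) (Adjunction.isIso_unit_app_of_iso adjF (Iso.refl _))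
      exact PC.shf_iso (asIso (adj'.unit.app (iF.obj A))).symm (L'.obj (iF.obj A)).property
    obtain ⟨ω, hω⟩ := PC.exists_char (c := cE) u hu
    have hD : PC.D cE Z ω := by
      intro T s
      have hp := IsPullback.of_hasPullback u s
      rw [(hω.pull hp).bij_iff]
      have := H _ _ _ hp
      exact (PC.adj_orth adj₁ _ cS.Ω).2 (PC.orth_of_isIso _ _)
    exact PC.iso_LF adjF u fun A => hω.bij_iff.1 (hF A ω hD)
end

section
/- Let p : E → S be a pre-cohesive geometric morphism between elementary toposes, let 2 be the subobject classifier of S, and let F be the least subtopos of E containing p^* 2, with reflector L_F : E → F. If a monomorphism u : U → X in E is F-dense (i.e., L_F u is an isomorphism), then p_* u : p_* U → p_* X is an isomorphism in S. -/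
open CategoryTheory Category Limits MonoidalCategory

universe u v u' v' u₂ v₂

/-- Let `p : E ⟶ S` be a pre-cohesive geometric morphism between elementary
toposes, `2 = cS.Ω` the subobject classifier of `S`, and `F` (inclusion `iF`, reflector
`LF ⊣ iF` preserving finite limits) the least subtopos of `E` containing `p^* 2`.  If a
monomorphism `u : U ⟶ X` in `E` is `F`-dense (i.e. `LF.map u` is an isomorphism), then
`p_* u : p_* U ⟶ p_* X` is an isomorphism in `S`. -/
theorem precohesive_dense_implies_pLower_iso
    {E : Type u} [Category.{v} E] [HasFiniteLimits E] [CartesianMonoidalCategory E]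
    [MonoidalClosed E] (cE : _root_.Classifier E)
    {S : Type u'} [Category.{v'} S] [HasFiniteLimits S] [CartesianMonoidalCategory S]
    [MonoidalClosed S] (cS : _root_.Classifier S)
    (pShriek : E ⥤ S) (pStar : S ⥤ E) (pLower : E ⥤ S) (pUpper : S ⥤ E)
    (adj₁ : pShriek ⊣ pStar) (adj₂ : pStar ⊣ pLower) (adj₃ : pLower ⊣ pUpper)
    [PreservesFiniteLimits pStar] [pStar.Full] [pStar.Faithful]
    (hUnitMono : ∀ A : S, Mono (adj₂.unit.app A))
    (hCounitMono : ∀ X : E, Mono (adj₂.counit.app X))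
    [PreservesFiniteProducts pShriek]
    {F : Type u₂} [Category.{v₂} F] (iF : F ⥤ E) [iF.Full] [iF.Faithful]
    (LF : E ⥤ F) (adjF : LF ⊣ iF) [PreservesFiniteLimits LF]
    (hZ : IsIso (adjF.unit.app (pStar.obj cS.Ω)))
    (hleast : ∀ {F' : Type u₂} [Category.{v₂} F'] (i' : F' ⥤ E), i'.Full → i'.Faithful →
      ∀ (L' : E ⥤ F') (adj' : L' ⊣ i'), PreservesFiniteLimits L' →
      IsIso (adj'.unit.app (pStar.obj cS.Ω)) →
      ∀ X : E, IsIso (adjF.unit.app X) → IsIso (adj'.unit.app X))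
    {U X : E} (u : U ⟶ X) (hu : Mono u) (hdense : IsIso (LF.map u)) :
    IsIso (pLower.map u) := by
  haveI : PreservesLimitsOfSize.{0, 0} pLower := adj₂.rightAdjoint_preservesLimits
  haveI : Mono u := hu
  -- the counit at the terminal object is an isomorphism
  have t1 : IsTerminal (𝟙_ E) := CartesianMonoidalCategory.isTerminalTensorUnit
  have t2 : IsTerminal (pStar.obj (pLower.obj (𝟙_ E))) :=
    IsTerminal.isTerminalObj pStar _ (IsTerminal.isTerminalObj pLower _ t1)
  haveI : IsIso (adj₂.counit.app (𝟙_ E)) := isIso_of_isTerminal t2 t1 _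
  haveI := hCounitMono cE.Ω
  -- the counit square at `truth` is a pullback
  have sqT : IsPullback (adj₂.counit.app (𝟙_ E)) (pStar.map (pLower.map cE.truth)) cE.truth
      (adj₂.counit.app cE.Ω) :=
    IsPullback.of_horiz_isIso_mono ⟨(adj₂.counit.naturality cE.truth).symm⟩
  obtain ⟨χ, hχ, -⟩ := cE.classifies u hu
  have sqU := (hχ.map pLower).map pStar
  have big := sqU.paste_horiz sqT
  have e1 : pStar.map (pLower.map (CartesianMonoidalCategory.toUnit U)) ≫
      adj₂.counit.app (𝟙_ E) = adj₂.counit.app U ≫ CartesianMonoidalCategory.toUnit U :=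
    t1.hom_ext _ _
  have e2 : pStar.map (pLower.map χ) ≫ adj₂.counit.app cE.Ω = adj₂.counit.app X ≫ χ :=
    adj₂.counit.naturality χ
  rw [e1, e2] at big
  have sq : IsPullback (adj₂.counit.app U) (pStar.map (pLower.map u)) u (adj₂.counit.app X) :=
    IsPullback.of_right big (adj₂.counit.naturality u).symm hχ
  -- hence `p^* p_* u` is dense
  have sqL := sq.map LF
  haveI : IsIso (LF.map u) := hdense
  haveI hd : IsIso (LF.map (pStar.map (pLower.map u))) := sqL.isIso_snd_of_isIso
  haveI := hZ
  have inj : ∀ a b : pLower.obj X ⟶ cS.Ω, pLower.map u ≫ a = pLower.map u ≫ b → a = b := by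
    intro a b hab
    apply pStar.map_injective
    rw [← cancel_mono (adjF.unit.app (pStar.obj cS.Ω))]
    have na := adjF.unit.naturality (pStar.map a)
    have nb := adjF.unit.naturality (pStar.map b)
    simp only [Functor.id_map, Functor.comp_map] at na nb
    rw [na, nb]
    congr 2
    rw [← cancel_epi (LF.map (pStar.map (pLower.map u)))]
    simp only [← Functor.map_comp, hab]
  haveI hm : Mono (pLower.map u) := inferInstance
  obtain ⟨ψ, hψ, -⟩ := cS.classifies (pLower.map u) hm
  have key : ψ = CartesianMonoidalCategory.toUnit _ ≫ cS.truth := by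
    apply inj
    rw [← hψ.w, ← Category.assoc]
    congr 1
    exact CartesianMonoidalCategory.toUnit_unique _ _
  let s := hψ.lift (CartesianMonoidalCategory.toUnit _) (𝟙 _) (by rw [key, Category.id_comp])
  have hs : s ≫ pLower.map u = 𝟙 _ := hψ.lift_snd _ _ _
  exact ⟨s, by rw [← cancel_mono (pLower.map u), Category.assoc, hs]; simp, hs⟩
end

section
/- Let p : E → S be a pre-cohesive geometric morphism between elementary toposes, let 2 be the subobject classifier of S, and let F be the least subtopos of E containing p^* 2. Then for every object A of S, the object p^! A belongs to F (i.e., the reflection unit of F at p^! A is an isomorphism); in other words, F lies above the centre of p. -/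
open CategoryTheory Category Limits MonoidalCategory

universe u v u' v' u₂ v₂

namespace LeastSub

section topos
variable {S : Type u'} [Category.{v'} S] [CartesianMonoidalCategory S]
open CartesianMonoidalCategory

theorem isIso_of_mono_epi (c : _root_.Classifier S) {M N : S} (g : M ⟶ N) (hm : Mono g)
    (he : Epi g) : IsIso g := by
  obtain ⟨χ, hχ, -⟩ := c.classifies g hm
  have h1 : χ = toUnit N ≫ c.truth := by
    rw [← cancel_epi g, ← hχ.w, ← Category.assoc]
    congr 1
    exact toUnit_unique _ _
  have h2 : toUnit N ≫ c.truth = 𝟙 N ≫ χ := by rw [h1, Category.id_comp]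
  have h3 : hχ.lift _ _ h2 ≫ g = 𝟙 N := hχ.lift_snd _ _ h2
  exact ⟨hχ.lift _ _ h2, by rw [← cancel_mono g, Category.assoc, h3]; simp, h3⟩

/-- the equality predicate -/
theorem exists_eqPred (c : _root_.Classifier S) (D : S) :
    ∃ δ : D ⊗ D ⟶ c.Ω, ∀ (T : S) (a b : T ⟶ D),
      lift a b ≫ δ = toUnit T ≫ c.truth ↔ a = b := by
  have hm : Mono (lift (𝟙 D) (𝟙 D)) := by
    constructor
    intro Z a b h
    simpa using congrArg (· ≫ fst D D) h
  obtain ⟨δ, hδ, -⟩ := c.classifies _ hm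
  refine ⟨δ, fun T a b => ⟨fun h => ?_, fun h => ?_⟩⟩
  · have h2 := hδ.lift_snd _ _ h.symm
    have ha := congrArg (· ≫ fst D D) h2
    have hb := congrArg (· ≫ snd D D) h2
    simp at ha hb
    exact ha.symm.trans hb
  · subst h
    have : lift a a = a ≫ lift (𝟙 D) (𝟙 D) := by simp
    rw [this, Category.assoc, ← hδ.w, ← Category.assoc]
    congr 1
    exact toUnit_unique _ _

theorem isIso_of_bij (c : _root_.Classifier S) {M N : S} (g : M ⟶ N)
    (H : ∀ (C : S) (k : M ⊗ C ⟶ c.Ω), ∃! h : N ⊗ C ⟶ c.Ω, (g ▷ C) ≫ h = k) : IsIso g := by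
  apply isIso_of_mono_epi c
  · constructor
    intro T a b hab
    obtain ⟨δ, hδ⟩ := exists_eqPred c M
    obtain ⟨χ, hχ, -⟩ := H M δ
    rw [← hδ, ← hχ]
    have e : lift a b ≫ g ▷ M = lift b b ≫ g ▷ M := by simp [hab]
    rw [← Category.assoc, e, Category.assoc, hχ, hδ]
  · constructor
    intro D a b hab
    obtain ⟨δ, hδ⟩ := exists_eqPred c D
    have e : (a ▷ D) ≫ δ = (b ▷ D) ≫ δ := by
      apply (H D ((g ▷ D) ≫ (b ▷ D) ≫ δ)).unique
      · simp only [← Category.assoc, ← comp_whiskerRight, hab]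
      · rfl
    have e1 := (hδ N b b).2 rfl
    have e2 : lift (𝟙 N) b ≫ (a ▷ D) ≫ δ = lift (𝟙 N) b ≫ (b ▷ D) ≫ δ := by rw [e]
    rw [← hδ, ← e1]
    simpa [← Category.assoc] using e2

end topos

section loc
variable {E : Type u} [Category.{v} E] {F : Type u₂} [Category.{v₂} F]

/-- `Z` is local for the morphisms inverted by `L`. -/
def Loc (L : E ⥤ F) (Z : E) : Prop :=
  ∀ ⦃X Y : E⦄ (f : X ⟶ Y), IsIso (L.map f) → ∀ g : X ⟶ Z, ∃! h : Y ⟶ Z, f ≫ h = g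

theorem Loc.of_iso {L : E ⥤ F} {Z Z' : E} (h : Loc L Z) (e : Z ≅ Z') : Loc L Z' := by
  intro X Y f hf g
  obtain ⟨k, hk, hu⟩ := h f hf (g ≫ e.inv)
  refine ⟨k ≫ e.hom, by dsimp only; rw [← Category.assoc, hk]; simp, fun y hy => ?_⟩
  rw [← hu (y ≫ e.inv) (by simp [← hy])]
  simp

theorem loc_of_unit {L : E ⥤ F} {i : F ⥤ E} (adj : L ⊣ i) {Z : E}
    (h : IsIso (adj.unit.app Z)) : Loc L Z := by
  apply Loc.of_iso (Z := i.obj (L.obj Z)) _ (asIso (adj.unit.app Z)).symm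
  intro X Y f hf g
  refine ⟨adj.homEquiv _ _ (inv (L.map f) ≫ (adj.homEquiv _ _).symm g), ?_, fun y hy => ?_⟩
  · dsimp only
    rw [← Adjunction.homEquiv_naturality_left]
    simp
  · rw [← Equiv.symm_apply_eq, ← hy, Adjunction.homEquiv_naturality_left_symm]
    simp

theorem unit_isIso_of_retract {L : E ⥤ F} {i : F ⥤ E} [i.Full] [i.Faithful] (adj : L ⊣ i) {Z : E}
    (r : i.obj (L.obj Z) ⟶ Z) (h : adj.unit.app Z ≫ r = 𝟙 Z) : IsIso (adj.unit.app Z) := by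
  refine ⟨r, h, ?_⟩
  have := loc_of_unit adj (Z := i.obj (L.obj Z)) inferInstance
  refine (this (adj.unit.app Z) inferInstance (adj.unit.app Z)).unique ?_ (Category.comp_id _)
  rw [← Category.assoc, h]
  exact Category.id_comp _

theorem inv_of_pullback (L : E ⥤ F) [HasFiniteLimits E] [PreservesFiniteLimits L]
    {P X Y Z : E} {a : P ⟶ X} {b : P ⟶ Y} {f : X ⟶ Z} {g : Y ⟶ Z} (h : IsPullback a b f g)
    (hf : IsIso (L.map f)) : IsIso (L.map b) :=
  (h.map L).isIso_snd_of_isIso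

end loc

section main
variable {E : Type u} [Category.{v} E] [HasFiniteLimits E] [CartesianMonoidalCategory E]
    {S : Type u'} [Category.{v'} S] [HasFiniteLimits S] [CartesianMonoidalCategory S]
    {pShriek : E ⥤ S} {pStar : S ⥤ E} {pLower : E ⥤ S} {pUpper : S ⥤ E}
    {F : Type u₂} [Category.{v₂} F] (L : E ⥤ F) [PreservesFiniteLimits L]
open CartesianMonoidalCategory

theorem shriek_iso (cS : _root_.Classifier S) (adj₁ : pShriek ⊣ pStar)
    [pStar.Full] [pStar.Faithful] [PreservesFiniteProducts pShriek]
    (hZ : Loc L (pStar.obj cS.Ω)) {X Y : E} (f : X ⟶ Y) (hf : IsIso (L.map f)) :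
    IsIso (pShriek.map f) := by
  apply isIso_of_bij cS
  intro C k
  let t : ∀ W : E, pShriek.obj (W ⊗ pStar.obj C) ⟶ pShriek.obj W ⊗ C := fun W =>
    lift (pShriek.map (fst _ _)) (pShriek.map (snd _ _) ≫ adj₁.counit.app C)
  have ht : ∀ W, IsIso (t W) := by
    intro W
    have : t W = CartesianMonoidalCategory.prodComparison pShriek W (pStar.obj C) ≫ (pShriek.obj W ◁ adj₁.counit.app C) := by
      apply hom_ext <;> simp [t]
    rw [this]
    infer_instance
  have hn : t X ≫ (pShriek.map f ▷ C) = pShriek.map (f ▷ pStar.obj C) ≫ t Y := by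
    apply hom_ext <;> simp [t, ← Functor.map_comp, ← Functor.map_comp_assoc]
  have hL : IsIso (L.map (f ▷ pStar.obj C)) := by
    have hp : IsPullback (fst X (pStar.obj C)) (f ▷ pStar.obj C) f (fst Y (pStar.obj C)) := by
      have w : fst X (pStar.obj C) ≫ f = f ▷ pStar.obj C ≫ fst Y (pStar.obj C) := by simp
      refine ⟨⟨w⟩, ⟨PullbackCone.IsLimit.mk w
        (fun s => lift s.fst (s.snd ≫ snd Y (pStar.obj C))) ?_ ?_ ?_⟩⟩
      · intro s; simp
      · intro s
        have := s.condition
        apply hom_ext <;> simp [this]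
      · intro s k h1 h2
        apply hom_ext
        · simp [h1]
        · simp [← h2]
    exact inv_of_pullback L hp hf
  obtain ⟨h, hh, hu⟩ := hZ (f ▷ pStar.obj C) hL (adj₁.homEquiv _ _ (t X ≫ k))
  refine ⟨inv (t Y) ≫ (adj₁.homEquiv _ _).symm h, ?_, fun y hy => ?_⟩
  · dsimp only
    rw [← cancel_epi (t X), ← Category.assoc, hn, Category.assoc, IsIso.hom_inv_id_assoc,
      ← Adjunction.homEquiv_naturality_left_symm, hh, Equiv.symm_apply_apply]
  · rw [← hu (adj₁.homEquiv _ _ (t Y ≫ y))]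
    · simp
    · dsimp only
      rw [← Adjunction.homEquiv_naturality_left, ← Category.assoc, ← hn, Category.assoc, hy]

theorem loc_star (cS : _root_.Classifier S) (adj₁ : pShriek ⊣ pStar)
    [pStar.Full] [pStar.Faithful] [PreservesFiniteProducts pShriek]
    (hZ : Loc L (pStar.obj cS.Ω)) (A : S) : Loc L (pStar.obj A) := by
  intro X Y f hf g
  have := shriek_iso L cS adj₁ hZ f hf
  refine ⟨adj₁.homEquiv _ _ (inv (pShriek.map f) ≫ (adj₁.homEquiv _ _).symm g), ?_, fun y hy => ?_⟩
  · dsimp only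
    rw [← Adjunction.homEquiv_naturality_left]
    simp
  · rw [← Equiv.symm_apply_eq, ← hy, Adjunction.homEquiv_naturality_left_symm]
    simp

/-- Subobjects of discrete objects are discrete. -/
theorem counit_iso_of_mono (cE : _root_.Classifier E) (adj₂ : pStar ⊣ pLower)
    [PreservesFiniteLimits pStar] [pStar.Full] [pStar.Faithful]
    (hCounitMono : ∀ X : E, Mono (adj₂.counit.app X)) {U : E} {B : S} (m : U ⟶ pStar.obj B)
    (hm : Mono m) : IsIso (adj₂.counit.app U) := by
  obtain ⟨χ, hχ, -⟩ := cE.classifies m hm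
  have : IsIso (toUnit (pStar.obj (𝟙_ S))) :=
    isIso_of_isTerminal (IsTerminal.isTerminalObj pStar _ isTerminalTensorUnit) isTerminalTensorUnit _
  -- transposes
  let x : B ⟶ pLower.obj cE.Ω := adj₂.homEquiv _ _ χ
  let t : 𝟙_ S ⟶ pLower.obj cE.Ω := adj₂.homEquiv _ _ (toUnit (pStar.obj (𝟙_ S)) ≫ cE.truth)
  have hx : pStar.map x ≫ adj₂.counit.app _ = χ :=
    (adj₂.homEquiv_counit _ _ _).symm.trans (Equiv.symm_apply_apply _ _)
  have ht : pStar.map t ≫ adj₂.counit.app _ = toUnit (pStar.obj (𝟙_ S)) ≫ cE.truth :=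
    (adj₂.homEquiv_counit _ _ _).symm.trans (Equiv.symm_apply_apply _ _)
  have hp := (IsPullback.of_hasPullback t x).map pStar
  let j : U ⟶ pStar.obj (𝟙_ S) := toUnit U ≫ inv (toUnit (pStar.obj (𝟙_ S)))
  have hj : IsPullback j m (pStar.map t) (pStar.map x) := by
    have := hCounitMono cE.Ω
    have w : j ≫ pStar.map t = m ≫ pStar.map x := by
      rw [← cancel_mono (adj₂.counit.app cE.Ω)]
      refine (Category.assoc _ _ _).trans (Eq.trans ?_ (Category.assoc _ _ _).symm)
      refine (congrArg (j ≫ ·) ht).trans (Eq.trans ?_ (congrArg (m ≫ ·) hx).symm)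
      rw [← hχ.w]
      simp [j]
    refine ⟨⟨w⟩, ⟨PullbackCone.IsLimit.mk w (fun s => hχ.lift (toUnit _) s.snd ?_) ?_ ?_ ?_⟩⟩
    · rw [← hx, ← Category.assoc, ← s.condition, Category.assoc, ht, ← Category.assoc]
      congr 1
      exact toUnit_unique _ _
    · intro s
      rw [← cancel_mono (toUnit (pStar.obj (𝟙_ S)))]
      exact toUnit_unique _ _
    · intro s
      exact hχ.lift_snd _ _ _
    · intro s k _ h2
      rw [← cancel_mono m, h2, hχ.lift_snd]
  let e : pStar.obj (pullback t x) ≅ U := hp.isoIsPullback _ _ hj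
  have h1 : IsIso (adj₂.counit.app (pStar.obj (pullback t x))) := inferInstance
  have h2 := adj₂.counit.naturality e.hom
  have h3 : adj₂.counit.app U = inv ((pLower ⋙ pStar).map e.hom) ≫
      adj₂.counit.app _ ≫ e.hom := by
    rw [IsIso.eq_inv_comp]; exact h2
  rw [h3]
  infer_instance

/-- Nullstellensatz -/
theorem nullst (cE : _root_.Classifier E) (adj₂ : pStar ⊣ pLower) (adj₃ : pLower ⊣ pUpper)
    [PreservesFiniteLimits pStar] [pStar.Full] [pStar.Faithful]
    (hCounitMono : ∀ X : E, Mono (adj₂.counit.app X)) {X : E} {A : S} (g h : X ⟶ pStar.obj A)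
    (hgh : pLower.map g = pLower.map h) : g = h := by
  let φ := adj₃.unit.app (pStar.obj A)
  have hφ : Mono (pLower.map φ) := by
    have : pLower.map φ ≫ adj₃.counit.app _ = 𝟙 _ := adj₃.left_triangle_components _
    exact mono_of_mono_fac this
  let K := pullback φ φ
  let m : K ⟶ pStar.obj (A ⊗ A) :=
    lift (pullback.fst φ φ) (pullback.snd φ φ) ≫ inv (CartesianMonoidalCategory.prodComparison pStar A A)
  have hm : Mono m := by
    have : Mono (lift (pullback.fst φ φ) (pullback.snd φ φ)) := by
      constructor
      intro Z a b hab
      have h1 := congrArg (· ≫ fst _ _) hab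
      have h2 := congrArg (· ≫ snd _ _) hab
      simp only [Category.assoc, lift_fst, lift_snd] at h1 h2
      exact pullback.hom_ext h1 h2
    exact mono_comp _ _
  have hK := counit_iso_of_mono cE adj₂ hCounitMono m hm
  have e : pLower.map (pullback.fst φ φ) = pLower.map (pullback.snd φ φ) := by
    rw [← cancel_mono (pLower.map φ), ← Functor.map_comp, ← Functor.map_comp, pullback.condition]
  have e' : pullback.fst φ φ = pullback.snd φ φ := by
    rw [← cancel_epi (adj₂.counit.app K)]
    have h1 := adj₂.counit.naturality (pullback.fst φ φ)
    have h2 := adj₂.counit.naturality (pullback.snd φ φ)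
    simp only [Functor.comp_map, Functor.id_map] at h1 h2
    rw [← h1, ← h2, e]
  have e2 : g ≫ φ = h ≫ φ := by
    have h1 := adj₃.unit.naturality g
    have h2 := adj₃.unit.naturality h
    simp only [Functor.comp_map, Functor.id_map] at h1 h2
    rw [h1, h2, hgh]
  rw [← pullback.lift_fst g h e2, e', pullback.lift_snd]

theorem lower_iso (cE : _root_.Classifier E) (cS : _root_.Classifier S)
    (adj₂ : pStar ⊣ pLower) (adj₃ : pLower ⊣ pUpper)
    [PreservesFiniteLimits pStar] [pStar.Full] [pStar.Faithful]
    (hCounitMono : ∀ X : E, Mono (adj₂.counit.app X))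
    (hloc : ∀ A, Loc L (pStar.obj A)) {X Y : E} (f : X ⟶ Y) (hf : IsIso (L.map f)) :
    IsIso (pLower.map f) := by
  have hlim : PreservesLimitsOfSize.{0, 0} pLower := adj₂.rightAdjoint_preservesLimits
  obtain ⟨ε, hε⟩ : ∃ ε : ∀ W, pStar.obj (pLower.obj W) ⟶ W, ε = fun W => adj₂.counit.app W :=
    ⟨_, rfl⟩
  have htri : ∀ W, adj₂.unit.app (pLower.obj W) ≫ pLower.map (ε W) = 𝟙 (pLower.obj W) := by
    subst hε
    exact fun W => adj₂.right_triangle_components W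
  -- dense monos
  have step : ∀ {U W : E} (d : U ⟶ W), Mono d → IsIso (L.map d) → IsIso (pLower.map d) := by
    intro U W d hd hLd
    have hp := IsPullback.of_hasPullback d (ε W)
    have hL := inv_of_pullback L hp hLd
    set d' := pullback.snd d (ε W)
    have hm : Mono d' := inferInstance
    have hi := counit_iso_of_mono cE adj₂ hCounitMono d' hm
    have hl : Loc L (pullback d (ε W)) :=
      (hloc _).of_iso (@asIso _ _ _ _ (adj₂.counit.app (pullback d (ε W))) hi)
    obtain ⟨r, hr, -⟩ := hl d' hL (𝟙 _)
    have hr' : r ≫ d' = 𝟙 _ :=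
      (hloc _ d' hL d').unique (by rw [← Category.assoc, hr, Category.id_comp]) (by simp)
    have e : (adj₂.unit.app _ ≫ pLower.map (r ≫ pullback.fst _ _)) ≫ pLower.map d = 𝟙 _ := by
      rw [Category.assoc, ← Functor.map_comp, Category.assoc, hp.w, ← Category.assoc, hr',
        Category.id_comp, htri]
      rfl
    have : Mono (pLower.map d) := inferInstance
    exact ⟨_, by rw [← cancel_mono (pLower.map d), Category.assoc, e]; simp, e⟩
  apply isIso_of_mono_epi cS
  · have hp := IsPullback.of_hasPullback f f
    have hL := inv_of_pullback L hp hf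
    have hd : IsIso (L.map (pullback.diagonal f)) := by
      have : L.map (pullback.diagonal f) ≫ L.map (pullback.snd f f) = 𝟙 _ := by
        rw [← Functor.map_comp]; simp
      exact IsIso.of_isIso_fac_right this
    have hi := step (pullback.diagonal f) inferInstance hd
    have e : pLower.map (pullback.fst f f) = pLower.map (pullback.snd f f) := by
      rw [← cancel_epi (pLower.map (pullback.diagonal f)), ← Functor.map_comp, ← Functor.map_comp]
      simp
    constructor
    intro T a b hab
    have hq := hp.map pLower
    exact (hq.lift_fst a b hab).symm.trans ((congrArg (hq.lift a b hab ≫ ·) e).trans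
      (hq.lift_snd a b hab))
  · have hp := IsPullback.of_hasPullback f (ε Y)
    have hL := inv_of_pullback L hp hf
    set f' := pullback.snd f (ε Y)
    have hu : ∀ {M N : S} (k : M ⟶ N), pLower.map (pStar.map k) =
        inv (adj₂.unit.app M) ≫ k ≫ adj₂.unit.app N := by
      intro M N k
      rw [IsIso.eq_inv_comp]
      exact (adj₂.unit.naturality k).symm
    have he : Epi (pLower.map f') := by
      constructor
      intro D a b hab
      have h1 : f' ≫ pStar.map (adj₂.unit.app _ ≫ a) = f' ≫ pStar.map (adj₂.unit.app _ ≫ b) := by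
        apply nullst cE adj₂ adj₃ hCounitMono
        rw [pLower.map_comp f', pLower.map_comp f', hu, hu]
        simp only [Category.assoc, IsIso.inv_hom_id_assoc]
        rw [← Category.assoc, hab, Category.assoc]
      have h2 := (hloc _ f' hL _).unique h1 rfl
      have h3 := pStar.map_injective h2
      exact (cancel_epi _).1 h3
    have hs : Epi (pLower.map (ε Y)) := by
      constructor
      intro D a b hab
      have h1 := congrArg (adj₂.unit.app (pLower.obj Y) ≫ ·) hab
      rw [← Category.assoc, ← Category.assoc, htri] at h1
      exact (Category.id_comp a).symm.trans (h1.trans (Category.id_comp b))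
    have w : pLower.map (pullback.fst f (ε Y)) ≫ pLower.map f =
        pLower.map f' ≫ pLower.map (ε Y) := by
      rw [← Functor.map_comp, ← Functor.map_comp, hp.w]
    have : Epi (pLower.map f' ≫ pLower.map (ε Y)) := epi_comp _ _
    exact epi_of_epi_fac w

end main

end LeastSub

/-- Let `p : E ⟶ S` be a pre-cohesive geometric morphism between elementary
toposes, `2 = cS.Ω` the subobject classifier of `S`, and `F` (inclusion `iF`, reflector
`LF ⊣ iF` preserving finite limits) the least subtopos of `E` containing `p^* 2`.  Then for
every object `A` of `S`, the object `p^! A` belongs to `F`, i.e. the reflection unit of `F`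
at `p^! A` is an isomorphism; in other words `F` lies above the centre of `p`. -/
theorem least_subtopos_contains_pUpper
    {E : Type u} [Category.{v} E] [HasFiniteLimits E] [CartesianMonoidalCategory E]
    [MonoidalClosed E] (cE : _root_.Classifier E)
    {S : Type u'} [Category.{v'} S] [HasFiniteLimits S] [CartesianMonoidalCategory S]
    [MonoidalClosed S] (cS : _root_.Classifier S)
    (pShriek : E ⥤ S) (pStar : S ⥤ E) (pLower : E ⥤ S) (pUpper : S ⥤ E)
    (adj₁ : pShriek ⊣ pStar) (adj₂ : pStar ⊣ pLower) (adj₃ : pLower ⊣ pUpper)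
    [PreservesFiniteLimits pStar] [pStar.Full] [pStar.Faithful]
    (hUnitMono : ∀ A : S, Mono (adj₂.unit.app A))
    (hCounitMono : ∀ X : E, Mono (adj₂.counit.app X))
    [PreservesFiniteProducts pShriek]
    {F : Type u₂} [Category.{v₂} F] (iF : F ⥤ E) [iF.Full] [iF.Faithful]
    (LF : E ⥤ F) (adjF : LF ⊣ iF) [PreservesFiniteLimits LF]
    (hZ : IsIso (adjF.unit.app (pStar.obj cS.Ω)))
    (hleast : ∀ {F' : Type u₂} [Category.{v₂} F'] (i' : F' ⥤ E), i'.Full → i'.Faithful →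
      ∀ (L' : E ⥤ F') (adj' : L' ⊣ i'), PreservesFiniteLimits L' →
      IsIso (adj'.unit.app (pStar.obj cS.Ω)) →
      ∀ X : E, IsIso (adjF.unit.app X) → IsIso (adj'.unit.app X))
    (A : S) :
    IsIso (adjF.unit.app (pUpper.obj A)) := by
  have hΩ := LeastSub.loc_of_unit adjF hZ
  have hloc := LeastSub.loc_star LF cS adj₁ hΩ
  have hi := LeastSub.lower_iso LF cE cS adj₂ adj₃ hCounitMono hloc
    (adjF.unit.app (pUpper.obj A)) inferInstance
  refine LeastSub.unit_isIso_of_retract adjF (adj₃.homEquiv _ _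
    (inv (pLower.map (adjF.unit.app (pUpper.obj A))) ≫ adj₃.counit.app A)) ?_
  refine (Adjunction.homEquiv_naturality_left adj₃ _ _).symm.trans ?_
  simp [-Functor.map_inv, Adjunction.homEquiv_unit]
end

section
/- Let p : E → S be a pre-cohesive geometric morphism between elementary toposes, let 2 be the subobject classifier of S, and let F be the least subtopos of E containing p^* 2. Then for every object A of S, the object p^* A belongs to F (i.e., the reflection unit of F at p^* A is an isomorphism). -/
open CategoryTheory Category Limits MonoidalCategory

universe u v u' v' u₂ v₂

section Helpers
open CartesianMonoidalCategory

/-- Orthogonality of `Z` to the morphisms inverted by `L`. -/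
def LocalObj {E : Type u} [Category.{v} E] {F : Type u₂} [Category.{v₂} F] (L : E ⥤ F)
    (Z : E) : Prop :=
  ∀ ⦃X Y : E⦄ (f : X ⟶ Y), IsIso (L.map f) → Function.Bijective (fun g : Y ⟶ Z => f ≫ g)

theorem localObj_right {E : Type u} [Category.{v} E] {F : Type u₂} [Category.{v₂} F]
    {L : E ⥤ F} {i : F ⥤ E} (adj : L ⊣ i) (W : F) : LocalObj L (i.obj W) := by
  intro X Y f hf
  constructor
  · intro g h e
    apply (adj.homEquiv _ _).symm.injective
    have e' := congrArg (adj.homEquiv _ _).symm e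
    simp only [adj.homEquiv_naturality_left_symm] at e'
    exact (cancel_epi _).1 e'
  · intro g
    refine ⟨adj.homEquiv _ _ (inv (L.map f) ≫ (adj.homEquiv _ _).symm g), ?_⟩
    apply (adj.homEquiv _ _).symm.injective
    simp only [adj.homEquiv_naturality_left_symm, Equiv.symm_apply_apply, IsIso.hom_inv_id_assoc]

theorem LocalObj.of_iso {E : Type u} [Category.{v} E] {F : Type u₂} [Category.{v₂} F]
    {L : E ⥤ F} {Z W : E} (h : LocalObj L Z) (e : Z ≅ W) : LocalObj L W := by
  intro X Y f hf
  constructor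
  · intro a b hab
    have : a ≫ e.inv = b ≫ e.inv := (h f hf).1 (by
      have := congrArg (· ≫ e.inv) hab
      simpa using this)
    exact (cancel_mono _).1 this
  · intro g
    obtain ⟨k, hk⟩ := (h f hf).2 (g ≫ e.inv)
    refine ⟨k ≫ e.hom, ?_⟩
    have := congrArg (· ≫ e.hom) hk
    simpa using this

theorem localObj_iff {E : Type u} [Category.{v} E] {F : Type u₂} [Category.{v₂} F]
    {L : E ⥤ F} {i : F ⥤ E} [i.Full] [i.Faithful] (adj : L ⊣ i) (Z : E) :
    LocalObj L Z ↔ IsIso (adj.unit.app Z) := by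
  constructor
  · intro h
    have hu : IsIso (L.map (adj.unit.app Z)) := by
      have h1 := adj.left_triangle_components Z
      have : L.map (adj.unit.app Z) = inv (adj.counit.app (L.obj Z)) :=
        (IsIso.eq_comp_inv _).2 h1 |>.trans (by simp)
      rw [this]; infer_instance
    obtain ⟨r, hr⟩ := (h _ hu).2 (𝟙 Z)
    dsimp at hr
    refine ⟨r, hr, ?_⟩
    apply (localObj_right adj (L.obj Z) _ hu).1
    dsimp
    rw [reassoc_of% hr]
    simp
  · intro h
    exact (localObj_right adj (L.obj Z)).of_iso (asIso (adj.unit.app Z)).symm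

theorem LocalObj.of_isPullback {E : Type u} [Category.{v} E] {F : Type u₂} [Category.{v₂} F]
    {L : E ⥤ F} {P A B C : E} {a : P ⟶ A} {b : P ⟶ B} {c : A ⟶ C} {d : B ⟶ C}
    (sq : IsPullback a b c d) (hA : LocalObj L A) (hB : LocalObj L B) (hC : LocalObj L C) :
    LocalObj L P := by
  intro X Y f hf
  constructor
  · intro g h e
    dsimp at e
    apply sq.hom_ext
    · apply (hA f hf).1; dsimp; rw [reassoc_of% e]
    · apply (hB f hf).1; dsimp; rw [reassoc_of% e]
  · intro g
    obtain ⟨x, hx⟩ := (hA f hf).2 (g ≫ a)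
    obtain ⟨y, hy⟩ := (hB f hf).2 (g ≫ b)
    dsimp at hx hy
    refine ⟨sq.lift x y ((hC f hf).1 ?_), ?_⟩
    · dsimp; rw [reassoc_of% hx, reassoc_of% hy, sq.w]
    · apply sq.hom_ext
      · simpa using hx
      · simpa using hy

/-- The singleton map is a monomorphism. -/
theorem exists_mono_ihom {S : Type u'} [Category.{v'} S] [CartesianMonoidalCategory S]
    [MonoidalClosed S] (cS : _root_.Classifier S) (A : S) :
    ∃ s : A ⟶ (ihom A).obj cS.Ω, Mono s := by
  have hd : Mono (lift (𝟙 A) (𝟙 A)) := ⟨fun g h e => by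
    simpa using congrArg (· ≫ fst A A) e⟩
  obtain ⟨χ, hχ, -⟩ := cS.classifies (lift (𝟙 A) (𝟙 A)) hd
  refine ⟨MonoidalClosed.curry χ, ⟨fun {X} a b e => ?_⟩⟩
  rw [← MonoidalClosed.curry_natural_left, ← MonoidalClosed.curry_natural_left] at e
  have e1 := MonoidalClosed.curry_injective e
  have e2 : lift a a ≫ χ = lift a b ≫ χ := by
    have := congrArg (lift a (𝟙 X) ≫ ·) e1
    simpa [lift_whiskerLeft_assoc] using this
  have e3 : lift a a ≫ χ = toUnit X ≫ cS.truth := by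
    have : lift a a = a ≫ lift (𝟙 A) (𝟙 A) := by simp [comp_lift]
    rw [this, assoc, ← hχ.w, ← assoc]
    congr 1
    exact toUnit_unique _ _
  have e4 : hχ.lift (toUnit X) (lift a b) (by rw [← e2, e3]) ≫ lift (𝟙 A) (𝟙 A) = lift a b :=
    hχ.lift_snd _ _ _
  have e5 := congrArg (· ≫ fst A A) e4
  have e6 := congrArg (· ≫ snd A A) e4
  simp at e5 e6
  exact e5.symm.trans e6

theorem localObj_pStar_ihom {E : Type u} [Category.{v} E] [CartesianMonoidalCategory E]
    {S : Type u'} [Category.{v'} S] [CartesianMonoidalCategory S] [MonoidalClosed S]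
    (G : E ⥤ S) (R : S ⥤ E) (adj : G ⊣ R) [R.Full] [R.Faithful] [PreservesFiniteProducts G]
    {F : Type u₂} [Category.{v₂} F] (L : E ⥤ F) [PreservesFiniteLimits L] (A Z : S)
    (hZ : LocalObj L (R.obj Z)) : LocalObj L (R.obj ((ihom A).obj Z)) := by
  -- the natural bijection of hom-sets
  let c (X : E) : G.obj (R.obj A ⊗ X) ⟶ A ⊗ G.obj X :=
    lift (G.map (fst _ _) ≫ adj.counit.app A) (G.map (snd _ _))
  have hc (X : E) : IsIso (c X) := by
    have : c X = CartesianMonoidalCategory.prodComparison G (R.obj A) X ≫ (adj.counit.app A ▷ G.obj X) := by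
      ext <;> simp [c]
    rw [this]; infer_instance
  have cnat {X Y : E} (f : X ⟶ Y) :
      G.map (R.obj A ◁ f) ≫ c Y = c X ≫ (A ◁ G.map f) := by
    ext <;> simp [c, ← Functor.map_comp, ← Functor.map_comp_assoc]
  let φ (X : E) (g : X ⟶ R.obj ((ihom A).obj Z)) : R.obj A ⊗ X ⟶ R.obj Z :=
    adj.homEquiv _ _ (c X ≫ MonoidalClosed.uncurry ((adj.homEquiv _ _).symm g))
  have hφ (X : E) : Function.Bijective (φ X) := by
    refine (adj.homEquiv _ _).bijective.comp (Function.Bijective.comp (g := fun k => c X ≫ k) ?_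
      (((ihom.adjunction A).homEquiv _ _).symm.bijective.comp (adj.homEquiv _ _).symm.bijective))
    exact ⟨fun a b e => (cancel_epi (c X)).1 e, fun b => ⟨inv (c X) ≫ b, by simp⟩⟩
  have φnat {X Y : E} (f : X ⟶ Y) (g : Y ⟶ R.obj ((ihom A).obj Z)) :
      φ X (f ≫ g) = (R.obj A ◁ f) ≫ φ Y g := by
    simp only [φ]
    rw [adj.homEquiv_naturality_left_symm, MonoidalClosed.uncurry_natural_left,
      ← adj.homEquiv_naturality_left, reassoc_of% (cnat f)]
  intro X Y f hf
  have hw : IsIso (L.map (R.obj A ◁ f)) := by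
    have sq : IsPullback (snd (R.obj A) X) (R.obj A ◁ f) f (snd (R.obj A) Y) := by
      refine ⟨⟨by simp⟩, ⟨PullbackCone.IsLimit.mk _
        (fun s => lift (s.snd ≫ fst _ _) s.fst) ?_ ?_ ?_⟩⟩
      · intro s; simp
      · intro s
        have := s.condition
        ext <;> simp [this]
      · intro s m h1 h2
        ext
        · simp [← h2]
        · simp [← h1]
    exact (sq.map L).isIso_snd_of_isIso
  have key : (φ X) ∘ (fun g => f ≫ g) = (fun g => (R.obj A ◁ f) ≫ g) ∘ φ Y := by
    funext g; exact φnat f g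
  rw [← Function.Bijective.of_comp_iff' (hφ X), key]
  exact (hZ _ hw).comp (hφ Y)

end Helpers

/-- Let `p : E ⟶ S` be a pre-cohesive geometric morphism between elementary
toposes, `2 = cS.Ω` the subobject classifier of `S`, and `F` (inclusion `iF`, reflector
`LF ⊣ iF` preserving finite limits) the least subtopos of `E` containing `p^* 2`.  Then for
every object `A` of `S`, the object `p^* A` belongs to `F`, i.e. the reflection unit of `F`
at `p^* A` is an isomorphism. -/
theorem least_subtopos_contains_pStar
    {E : Type u} [Category.{v} E] [HasFiniteLimits E] [CartesianMonoidalCategory E]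
    [MonoidalClosed E] (cE : _root_.Classifier E)
    {S : Type u'} [Category.{v'} S] [HasFiniteLimits S] [CartesianMonoidalCategory S]
    [MonoidalClosed S] (cS : _root_.Classifier S)
    (pShriek : E ⥤ S) (pStar : S ⥤ E) (pLower : E ⥤ S) (pUpper : S ⥤ E)
    (adj₁ : pShriek ⊣ pStar) (adj₂ : pStar ⊣ pLower) (adj₃ : pLower ⊣ pUpper)
    [PreservesFiniteLimits pStar] [pStar.Full] [pStar.Faithful]
    (hUnitMono : ∀ A : S, Mono (adj₂.unit.app A))
    (hCounitMono : ∀ X : E, Mono (adj₂.counit.app X))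
    [PreservesFiniteProducts pShriek]
    {F : Type u₂} [Category.{v₂} F] (iF : F ⥤ E) [iF.Full] [iF.Faithful]
    (LF : E ⥤ F) (adjF : LF ⊣ iF) [PreservesFiniteLimits LF]
    (hZ : IsIso (adjF.unit.app (pStar.obj cS.Ω)))
    (hleast : ∀ {F' : Type u₂} [Category.{v₂} F'] (i' : F' ⥤ E), i'.Full → i'.Faithful →
      ∀ (L' : E ⥤ F') (adj' : L' ⊣ i'), PreservesFiniteLimits L' →
      IsIso (adj'.unit.app (pStar.obj cS.Ω)) →
      ∀ X : E, IsIso (adjF.unit.app X) → IsIso (adj'.unit.app X))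
    (A : S) :
    IsIso (adjF.unit.app (pStar.obj A)) := by
  rw [← localObj_iff adjF] at hZ ⊢
  obtain ⟨s, hs⟩ := exists_mono_ihom cS A
  obtain ⟨χ, hχ, -⟩ := cS.classifies s hs
  refine LocalObj.of_isPullback (hχ.map pStar) ?_
    (localObj_pStar_ihom pShriek pStar adj₁ LF A cS.Ω hZ) hZ
  intro X Y f _
  have hu (W : E) (a b : W ⟶ pStar.obj (𝟙_ S)) : a = b :=
    (adj₁.homEquiv _ _).symm.injective (CartesianMonoidalCategory.toUnit_unique _ _)
  exact ⟨fun a b _ => hu _ _ _,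
    fun g => ⟨adj₁.homEquiv _ _ (CartesianMonoidalCategory.toUnit _), hu _ _ _⟩⟩
end

section
/- Let p : E → S be a pre-cohesive geometric morphism between elementary toposes, let 2 be the subobject classifier of S, and let F be the least subtopos of E containing p^* 2. Then F is the least subtopos of E containing both subcategories p^* : S → E and p^! : S → E; that is, for every object A of S both p^* A and p^! A belong to F, and every subtopos G of E such that p^* A and p^! A belong to G for all objects A of S contains F. -/
open CategoryTheory Category Limits MonoidalCategory

universe u v u' v' u₂ v₂

/-- `g` is orthogonal to `Z`. -/
def OrthTo {C : Type u} [Category.{v} C] {X Y : C} (g : X ⟶ Y) (Z : C) : Prop :=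
  Function.Bijective (fun h : Y ⟶ Z => g ≫ h)

lemma OrthTo.of_iso {C : Type u} [Category.{v} C] {X Y : C} (g : X ⟶ Y) (Z : C) [IsIso g] :
    OrthTo g Z := by
  constructor
  · intro a b h
    exact (cancel_epi g).1 h
  · intro k
    exact ⟨inv g ≫ k, by simp⟩

/-- Orthogonality transports along an isomorphism of arrows. -/
lemma OrthTo.transport {C : Type u} [Category.{v} C] {X Y X' Y' : C} {g : X ⟶ Y} {g' : X' ⟶ Y'}
    (a : X ⟶ X') (b : Y ⟶ Y') [IsIso a] [IsIso b] (w : g ≫ b = a ≫ g') {Z : C}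
    (h : OrthTo g Z) : OrthTo g' Z := by
  constructor
  · intro s t hst
    have hst' : g' ≫ s = g' ≫ t := hst
    have : b ≫ s = b ≫ t := h.1 (by
      show g ≫ b ≫ s = g ≫ b ≫ t
      rw [← Category.assoc, w, Category.assoc, hst', ← Category.assoc, ← w, Category.assoc])
    exact (cancel_epi b).1 this
  · intro k
    obtain ⟨s, hs⟩ := h.2 (a ≫ k)
    have hs' : g ≫ s = a ≫ k := hs
    refine ⟨inv b ≫ s, ?_⟩
    show g' ≫ inv b ≫ s = k
    have w' : a ≫ g' ≫ inv b = g := by rw [← Category.assoc, ← w]; simp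
    rw [← cancel_epi a, ← hs']
    rw [← w']
    simp

lemma OrthTo.pullback {C : Type u} [Category.{v} C] {X Y P A B D : C} (g : X ⟶ Y)
    {p : P ⟶ A} {q : P ⟶ B} {r : A ⟶ D} {s : B ⟶ D} (sq : IsPullback p q r s)
    (hA : OrthTo g A) (hB : OrthTo g B) (hD : OrthTo g D) : OrthTo g P := by
  constructor
  · intro a b hab
    have hab' : g ≫ a = g ≫ b := hab
    apply sq.hom_ext
    · apply hA.1
      show g ≫ a ≫ p = g ≫ b ≫ p
      rw [← Category.assoc, hab', Category.assoc]
    · apply hB.1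
      show g ≫ a ≫ q = g ≫ b ≫ q
      rw [← Category.assoc, hab', Category.assoc]
  · intro k
    obtain ⟨a, ha⟩ := hA.2 (k ≫ p)
    obtain ⟨b, hb⟩ := hB.2 (k ≫ q)
    have ha' : g ≫ a = k ≫ p := ha
    have hb' : g ≫ b = k ≫ q := hb
    have hw : a ≫ r = b ≫ s := hD.1 (by
      show g ≫ a ≫ r = g ≫ b ≫ s
      rw [← Category.assoc, ha', ← Category.assoc, hb', Category.assoc, Category.assoc, sq.w])
    refine ⟨sq.lift a b hw, ?_⟩
    apply sq.hom_ext
    · simpa using ha'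
    · simpa using hb'

lemma OrthTo.adj {C : Type u} [Category.{v} C] {D : Type u'} [Category.{v'} D]
    {L : C ⥤ D} {R : D ⥤ C} (adj : L ⊣ R) {X Y : C} (f : X ⟶ Y) (Z : D) :
    OrthTo (L.map f) Z ↔ OrthTo f (R.obj Z) := by
  have key : (fun h : Y ⟶ R.obj Z => f ≫ h) ∘ (adj.homEquiv Y Z)
      = (adj.homEquiv X Z) ∘ (fun h : L.obj Y ⟶ Z => L.map f ≫ h) := by
    funext h
    simp [Adjunction.homEquiv_naturality_left]
  unfold OrthTo
  rw [← Function.Bijective.of_comp_iff _ (adj.homEquiv Y Z).bijective, key,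
    Function.Bijective.of_comp_iff' (adj.homEquiv X Z).bijective]

/-- The whiskering of a map is a pullback of that map. -/
lemma isPullback_whisker {C : Type u} [Category.{v} C] [CartesianMonoidalCategory C]
    (Z : C) {X Y : C} (f : X ⟶ Y) :
    IsPullback (Z ◁ f) (CartesianMonoidalCategory.snd Z X)
      (CartesianMonoidalCategory.snd Z Y) f := by
  refine ⟨⟨by simp⟩, ⟨PullbackCone.IsLimit.mk _
    (fun s => CartesianMonoidalCategory.lift (s.fst ≫ CartesianMonoidalCategory.fst _ _) s.snd)
    ?_ ?_ ?_⟩⟩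
  · intro s
    apply CartesianMonoidalCategory.hom_ext
    · simp
    · simpa using s.condition.symm
  · intro s
    simp
  · intro s m h₁ h₂
    apply CartesianMonoidalCategory.hom_ext
    · simp [← h₁]
    · simp [← h₂]

lemma isIso_of_isPullback_right {C : Type u} [Category.{v} C] {P A B D : C}
    {p : P ⟶ A} {q : P ⟶ B} {r : A ⟶ D} {s : B ⟶ D} (sq : IsPullback p q r s) [IsIso s] :
    IsIso p := sq.isIso_fst_of_isIso

/-- In a topos, every object is a pullback of powers of `Ω`. -/
lemma exists_pullback_power {S : Type u'} [Category.{v'} S] [CartesianMonoidalCategory S]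
    [MonoidalClosed S] (cS : _root_.Classifier S) (A : S) :
    ∃ (m : A ⟶ (ihom A).obj cS.Ω) (χ : (ihom A).obj cS.Ω ⟶ cS.Ω),
      IsPullback (CartesianMonoidalCategory.toUnit A) m cS.truth χ := by
  let d : A ⟶ A ⊗ A := CartesianMonoidalCategory.lift (𝟙 A) (𝟙 A)
  have hd : Mono d := ⟨fun a b h => by
    have := congrArg (· ≫ CartesianMonoidalCategory.fst A A) h
    simpa [d] using this⟩
  obtain ⟨δ, hδ, -⟩ := cS.classifies d hd
  let s : A ⟶ (ihom A).obj cS.Ω := MonoidalClosed.curry δ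
  have hs : Mono s := ⟨fun {X} x y h => by
    have h1 : A ◁ x ≫ δ = A ◁ y ≫ δ := by
      apply MonoidalClosed.curry_injective
      rw [MonoidalClosed.curry_natural_left, MonoidalClosed.curry_natural_left]
      exact h
    have h2 := congrArg (CartesianMonoidalCategory.lift x (𝟙 X) ≫ ·) h1
    have h3 : CartesianMonoidalCategory.lift x x ≫ δ
        = CartesianMonoidalCategory.lift x y ≫ δ := by simpa [← Category.assoc] using h2
    have h4 : CartesianMonoidalCategory.lift x x = x ≫ d := by
      apply CartesianMonoidalCategory.hom_ext <;> simp [d]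
    have h5 : CartesianMonoidalCategory.toUnit X ≫ cS.truth
        = CartesianMonoidalCategory.lift x y ≫ δ := by
      rw [← h3, h4, Category.assoc, ← hδ.w, ← Category.assoc]
      congr 1
      exact CartesianMonoidalCategory.toUnit_unique _ _
    have h6 := hδ.lift_snd _ _ h5
    have h7 := congrArg (· ≫ CartesianMonoidalCategory.fst A A) h6
    have h8 := congrArg (· ≫ CartesianMonoidalCategory.snd A A) h6
    simp [d] at h7 h8
    exact h7.symm.trans h8⟩
  obtain ⟨χ, hχ, -⟩ := cS.classifies s hs
  exact ⟨s, χ, hχ⟩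

section refl

variable {E : Type u} [Category.{v} E] {F : Type u₂} [Category.{v₂} F] {iF : F ⥤ E} [iF.Full]
  [iF.Faithful] {LF : E ⥤ F} (adjF : LF ⊣ iF)

lemma orth_of_isIso_unit {X Y Z : E} (hZ : IsIso (adjF.unit.app Z)) (f : X ⟶ Y)
    [IsIso (LF.map f)] : OrthTo f Z := by
  have h : OrthTo f (iF.obj (LF.obj Z)) := (OrthTo.adj adjF f _).1 (OrthTo.of_iso _ _)
  have key : (fun h : Y ⟶ iF.obj (LF.obj Z) => f ≫ h) ∘ (fun h => h ≫ adjF.unit.app Z)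
      = (fun h => h ≫ adjF.unit.app Z) ∘ (fun h : Y ⟶ Z => f ≫ h) := by
    funext h
    simp
  have hb : ∀ W : E, Function.Bijective (fun h : W ⟶ Z => h ≫ adjF.unit.app Z) := fun W =>
    ⟨fun a b h => (cancel_mono _).1 h, fun k => ⟨k ≫ inv (adjF.unit.app Z), by simp⟩⟩
  unfold OrthTo at h ⊢
  refine (Function.Bijective.of_comp_iff' (hb X) _).1 ?_
  have hk := (Function.Bijective.of_comp_iff _ (hb Y)).2 h
  exact key ▸ hk

lemma isIso_map_unit (X : E) : IsIso (LF.map (adjF.unit.app X)) := by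
  infer_instance

lemma isIso_unit_of_orth {Z : E} (h : OrthTo (adjF.unit.app Z) Z) :
    IsIso (adjF.unit.app Z) := by
  obtain ⟨r, hr⟩ := h.2 (𝟙 Z)
  have hr' : adjF.unit.app Z ≫ r = 𝟙 Z := hr
  have ho : OrthTo (adjF.unit.app Z) (iF.obj (LF.obj Z)) :=
    (OrthTo.adj adjF _ _).1 (OrthTo.of_iso _ _)
  refine ⟨r, hr', ho.1 ?_⟩
  show adjF.unit.app Z ≫ r ≫ adjF.unit.app Z = adjF.unit.app Z ≫ 𝟙 _
  rw [← Category.assoc, hr']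
  simp

/-- A map between local objects inverted by the reflector is invertible. -/
lemma isIso_of_local {X Y : E} (f : X ⟶ Y) [IsIso (LF.map f)] (hX : IsIso (adjF.unit.app X))
    (hY : IsIso (adjF.unit.app Y)) : IsIso f := by
  have w : f ≫ adjF.unit.app Y = adjF.unit.app X ≫ iF.map (LF.map f) := by simp
  have : IsIso (f ≫ adjF.unit.app Y) := by rw [w]; infer_instance
  exact IsIso.of_isIso_comp_right f (adjF.unit.app Y)

/-- To be local it suffices to be orthogonal to the monomorphisms inverted by the reflector. -/
lemma isIso_unit_of_orth_mono [HasFiniteLimits E] [PreservesFiniteLimits LF] {Z : E}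
    (h : ∀ {X Y : E} (f : X ⟶ Y), Mono f → IsIso (LF.map f) → OrthTo f Z) :
    IsIso (adjF.unit.app Z) := by
  apply isIso_unit_of_orth
  apply h _ _ inferInstance
  let η := adjF.unit.app Z
  have sq := IsPullback.of_hasPullback η η
  let d : Z ⟶ pullback η η := pullback.lift (𝟙 Z) (𝟙 Z) rfl
  have hd1 : d ≫ pullback.fst η η = 𝟙 Z := pullback.lift_fst _ _ _
  have hd2 : d ≫ pullback.snd η η = 𝟙 Z := pullback.lift_snd _ _ _
  have hd : Mono d := by
    have : Mono (d ≫ pullback.fst η η) := by rw [hd1]; infer_instance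
    exact mono_of_mono d (pullback.fst η η)
  have hη : IsIso (LF.map η) := isIso_map_unit adjF Z
  have hfst : IsIso (LF.map (pullback.fst η η)) := isIso_of_isPullback_right (sq.map LF)
  have hLd : IsIso (LF.map d) := by
    have : IsIso (LF.map d ≫ LF.map (pullback.fst η η)) := by
      rw [← LF.map_comp, hd1]; infer_instance
    exact IsIso.of_isIso_comp_right _ (LF.map (pullback.fst η η))
  have heq : pullback.fst η η = pullback.snd η η := (h d hd hLd).1 (hd1.trans hd2.symm)
  refine ⟨fun a b hab => ?_⟩
  have h1 := pullback.lift_fst a b hab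
  have h2 := pullback.lift_snd a b hab
  exact h1.symm.trans ((congrArg (pullback.lift a b hab ≫ ·) heq).trans h2)

end refl

/-- A subobject of a discrete object is discrete. -/
lemma discrete_sub {E : Type u} [Category.{v} E] [CartesianMonoidalCategory E]
    (cE : _root_.Classifier E)
    {S : Type u'} [Category.{v'} S] [HasFiniteLimits S] [CartesianMonoidalCategory S]
    (pStar : S ⥤ E) (pLower : E ⥤ S) (adj₂ : pStar ⊣ pLower)
    [PreservesFiniteLimits pStar] [pStar.Full] [pStar.Faithful]
    (hCounitMono : ∀ X : E, Mono (adj₂.counit.app X)) {U : E} {B : S} (m : U ⟶ pStar.obj B)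
    (hm : Mono m) : ∃ C : S, Nonempty (U ≅ pStar.obj C) := by
  obtain ⟨χ, hχ, -⟩ := cE.classifies m hm
  have hT : IsTerminal (pStar.obj (𝟙_ S)) :=
    IsTerminal.isTerminalObj pStar _ CartesianMonoidalCategory.isTerminalTensorUnit
  let b : B ⟶ pLower.obj cE.Ω := adj₂.homEquiv _ _ χ
  let t₀ : pStar.obj (𝟙_ S) ⟶ cE.Ω := CartesianMonoidalCategory.toUnit _ ≫ cE.truth
  let t : 𝟙_ S ⟶ pLower.obj cE.Ω := adj₂.homEquiv _ _ t₀
  have hb : pStar.map b ≫ adj₂.counit.app cE.Ω = χ := by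
    simpa [b] using (adj₂.homEquiv_counit (g := b)).symm
  have ht : pStar.map t ≫ adj₂.counit.app cE.Ω = t₀ := by
    simpa [t] using (adj₂.homEquiv_counit (g := t)).symm
  have := hCounitMono cE.Ω
  have sq' : IsPullback (hT.from U) m (pStar.map t) (pStar.map b) := by
    refine ⟨⟨?_⟩, ⟨PullbackCone.IsLimit.mk _
      (fun s => hχ.lift (CartesianMonoidalCategory.toUnit _) s.snd ?_) ?_ ?_ ?_⟩⟩
    · rw [← cancel_mono (adj₂.counit.app cE.Ω), Category.assoc, ht, Category.assoc, hb, ← hχ.w]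
      simp only [t₀, ← Category.assoc]
      congr 1
      exact CartesianMonoidalCategory.toUnit_unique _ _
    · have := congrArg (· ≫ adj₂.counit.app cE.Ω) s.condition
      simp only [Category.assoc, ht, hb] at this
      rw [← this]
      simp only [t₀, ← Category.assoc]
      congr 1
      exact CartesianMonoidalCategory.toUnit_unique _ _
    · intro s
      exact hT.hom_ext _ _
    · intro s
      simp
    · intro s k h₁ h₂
      rw [← cancel_mono m]
      simp [h₂]
  have sq := (IsPullback.of_hasPullback t b).map pStar
  exact ⟨_, ⟨sq'.isoIsPullback _ _ sq⟩⟩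

/-- Let `p : E ⟶ S` be a pre-cohesive geometric morphism between elementary
toposes, `2 = cS.Ω` the subobject classifier of `S`, and `F` (inclusion `iF`, reflector
`LF ⊣ iF` preserving finite limits) the least subtopos of `E` containing `p^* 2`.  Then `F`
is the least subtopos of `E` containing both subcategories `p^*` and `p^!`: for every `A`
in `S` both `p^* A` and `p^! A` belong to `F`, and every subtopos `G` of `E` such that
`p^* A` and `p^! A` belong to `G` for all `A` contains `F`. -/
theorem least_subtopos_containing_pStar2_is_weak_Aufhebung
    {E : Type u} [Category.{v} E] [HasFiniteLimits E] [CartesianMonoidalCategory E]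
    [MonoidalClosed E] (cE : _root_.Classifier E)
    {S : Type u'} [Category.{v'} S] [HasFiniteLimits S] [CartesianMonoidalCategory S]
    [MonoidalClosed S] (cS : _root_.Classifier S)
    (pShriek : E ⥤ S) (pStar : S ⥤ E) (pLower : E ⥤ S) (pUpper : S ⥤ E)
    (adj₁ : pShriek ⊣ pStar) (adj₂ : pStar ⊣ pLower) (adj₃ : pLower ⊣ pUpper)
    [PreservesFiniteLimits pStar] [pStar.Full] [pStar.Faithful]
    (hUnitMono : ∀ A : S, Mono (adj₂.unit.app A))
    (hCounitMono : ∀ X : E, Mono (adj₂.counit.app X))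
    [PreservesFiniteProducts pShriek]
    {F : Type u₂} [Category.{v₂} F] (iF : F ⥤ E) [iF.Full] [iF.Faithful]
    (LF : E ⥤ F) (adjF : LF ⊣ iF) [PreservesFiniteLimits LF]
    (hZ : IsIso (adjF.unit.app (pStar.obj cS.Ω)))
    (hleast : ∀ {F' : Type u₂} [Category.{v₂} F'] (i' : F' ⥤ E), i'.Full → i'.Faithful →
      ∀ (L' : E ⥤ F') (adj' : L' ⊣ i'), PreservesFiniteLimits L' →
      IsIso (adj'.unit.app (pStar.obj cS.Ω)) →
      ∀ X : E, IsIso (adjF.unit.app X) → IsIso (adj'.unit.app X))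
    :
    (∀ A : S, IsIso (adjF.unit.app (pStar.obj A)) ∧ IsIso (adjF.unit.app (pUpper.obj A))) ∧
    (∀ {G : Type u₂} [Category.{v₂} G] (iG : G ⥤ E), iG.Full → iG.Faithful →
      ∀ (LG : E ⥤ G) (adjG : LG ⊣ iG), PreservesFiniteLimits LG →
      (∀ A : S, IsIso (adjG.unit.app (pStar.obj A)) ∧ IsIso (adjG.unit.app (pUpper.obj A))) →
      ∀ X : E, IsIso (adjF.unit.app X) → IsIso (adjG.unit.app X)) := by
  have hstar : ∀ A : S, IsIso (adjF.unit.app (pStar.obj A)) := by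
    intro A
    apply isIso_unit_of_orth
    have hΩ : ∀ {X Y : E} (f : X ⟶ Y), IsIso (LF.map f) → OrthTo (pShriek.map f) cS.Ω := by
      intro X Y f hf
      exact (OrthTo.adj adj₁ f _).2 (orth_of_isIso_unit adjF hZ f)
    have hpow : ∀ {X Y : E} (f : X ⟶ Y), IsIso (LF.map f) →
        OrthTo (pShriek.map f) ((ihom A).obj cS.Ω) := by
      intro X Y f hf
      refine (OrthTo.adj (ihom.adjunction A) (pShriek.map f) cS.Ω).1 ?_
      have hw : IsIso (LF.map (pStar.obj A ◁ f)) :=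
        isIso_of_isPullback_right ((isPullback_whisker (pStar.obj A) f).map LF)
      refine OrthTo.transport
        (CartesianMonoidalCategory.prodComparison pShriek (pStar.obj A) X ≫
          adj₁.counit.app A ▷ pShriek.obj X)
        (CartesianMonoidalCategory.prodComparison pShriek (pStar.obj A) Y ≫
          adj₁.counit.app A ▷ pShriek.obj Y) ?_ (hΩ (pStar.obj A ◁ f) hw)
      apply CartesianMonoidalCategory.hom_ext
      · simp [CartesianMonoidalCategory.prodComparison, ← Functor.map_comp_assoc]
      · simp [CartesianMonoidalCategory.prodComparison, ← Functor.map_comp]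
    obtain ⟨m, χ, sq⟩ := exists_pullback_power cS A
    have hη := isIso_map_unit adjF (pStar.obj A)
    refine (OrthTo.adj adj₁ _ _).1 (OrthTo.pullback _ sq ?_ (hpow _ hη) (hΩ _ hη))
    exact ⟨fun a b _ => CartesianMonoidalCategory.toUnit_unique _ _,
      fun k => ⟨CartesianMonoidalCategory.toUnit _, CartesianMonoidalCategory.toUnit_unique _ _⟩⟩
  refine ⟨fun A => ⟨hstar A, ?_⟩, ?_⟩
  · apply isIso_unit_of_orth_mono
    intro X Y m hm hLm
    refine (OrthTo.adj adj₃ m A).1 ?_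
    have sq := IsPullback.of_hasPullback (adj₂.counit.app Y) m
    have hmono : Mono (pullback.fst (adj₂.counit.app Y) m) := inferInstance
    have hL : IsIso (LF.map (pullback.fst (adj₂.counit.app Y) m)) :=
      isIso_of_isPullback_right (sq.map LF)
    obtain ⟨C, ⟨e⟩⟩ := discrete_sub cE pStar pLower adj₂ hCounitMono _ hmono
    have hV : IsIso (adjF.unit.app (pullback (adj₂.counit.app Y) m)) := by
      have := hstar C
      rw [NatTrans.isIso_app_iff_of_iso adjF.unit e]
      exact this
    have hiso : IsIso (pullback.fst (adj₂.counit.app Y) m) :=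
      isIso_of_local adjF _ hV (hstar _)
    have hc : IsIso (pLower.map (adj₂.counit.app Y)) := inferInstance
    have hpres := adj₂.rightAdjoint_preservesLimits
    have sq2 := sq.map pLower
    have hsnd : IsIso (pLower.map (pullback.snd (adj₂.counit.app Y) m)) :=
      isIso_of_isPullback_right sq2.flip
    have : IsIso (pLower.map m) := by
      have h1 : IsIso (pLower.map (pullback.snd (adj₂.counit.app Y) m) ≫ pLower.map m) := by
        rw [← sq2.w]; infer_instance
      exact IsIso.of_isIso_comp_left (pLower.map (pullback.snd (adj₂.counit.app Y) m)) _
    exact OrthTo.of_iso _ _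
  · intro G _ iG h1 h2 LG adjG h3 h4 X hX
    exact hleast iG h1 h2 LG adjG h3 (h4 _).1 X hX
end

section
/- Let E and S be cartesian closed categories with finite limits, let R : S → E be a fully faithful functor with a finite-product preserving left adjoint L : E → S, and let f : W → X be a morphism in E such that L f : L W → L X is an isomorphism in S. Then for every object A of S, the morphism (R A)^f : (R A)^X → (R A)^W is an isomorphism, i.e., f is internally orthogonal to R A. -/
open CategoryTheory Category Limits MonoidalCategory

universe u v u' v'

/-- Precomposition with `f ▷ T` is bijective on maps into `R A`. -/
theorem aux_bijective
    {E : Type u} [Category.{v} E] {S : Type u'} [Category.{v'} S]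
    (R : S ⥤ E) (L : E ⥤ S) (adj : L ⊣ R) {W X : E} (f : W ⟶ X) [IsIso (L.map f)] (A : S) :
    Function.Bijective (fun g : X ⟶ R.obj A => f ≫ g) := by
  have h : (fun g : X ⟶ R.obj A => f ≫ g) =
      adj.homEquiv W A ∘ (fun g : L.obj X ⟶ A => L.map f ≫ g) ∘ (adj.homEquiv X A).symm := by
    funext g
    simp [Adjunction.homEquiv_naturality_left]
  rw [h]
  refine (adj.homEquiv W A).bijective.comp (Function.Bijective.comp ?_ (Equiv.bijective _))
  exact ⟨fun a b hab => (cancel_epi (L.map f)).1 hab, fun b => ⟨inv (L.map f) ≫ b, by simp⟩⟩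

/-- Let `E` and `S` be cartesian closed categories with finite limits,
`R : S ⥤ E` a fully faithful functor with a finite-product preserving left adjoint
`L : E ⥤ S`, and `f : W ⟶ X` a morphism in `E` such that `L.map f` is an isomorphism.
Then for every object `A` of `S`, the morphism `(R A)^f : (R A)^X ⟶ (R A)^W` is an
isomorphism, i.e. `f` is internally orthogonal to `R A`. -/
theorem internallyOrthogonal_of_L_map_isIso
    {E : Type u} [Category.{v} E] [HasFiniteLimits E] [CartesianMonoidalCategory E]
    [MonoidalClosed E]
    {S : Type u'} [Category.{v'} S] [HasFiniteLimits S] [CartesianMonoidalCategory S]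
    [MonoidalClosed S]
    (R : S ⥤ E) [R.Full] [R.Faithful] (L : E ⥤ S) (adj : L ⊣ R)
    [PreservesFiniteProducts L]
    {W X : E} (f : W ⟶ X) (hf : IsIso (L.map f)) (A : S) :
    IsIso ((MonoidalClosed.pre f).app (R.obj A)) := by
  have : L.Monoidal := Functor.Monoidal.ofChosenFiniteProducts L
  rw [isIso_iff_yoneda_map_bijective]
  intro T
  have : IsIso (L.map (f ▷ T)) := by
    rw [Functor.Monoidal.map_whiskerRight]
    infer_instance
  have h : (fun x : T ⟶ (ihom X).obj (R.obj A) => x ≫ (MonoidalClosed.pre f).app (R.obj A)) =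
      ((ihom.adjunction W).homEquiv T (R.obj A)) ∘ (fun g : X ⊗ T ⟶ R.obj A => f ▷ T ≫ g) ∘
        ((ihom.adjunction X).homEquiv T (R.obj A)).symm := by
    funext x
    apply MonoidalClosed.uncurry_injective
    rw [MonoidalClosed.uncurry_pre_app]
    exact (MonoidalClosed.uncurry_curry _).symm
  rw [h]
  exact (Equiv.bijective _).comp
    ((aux_bijective R L adj (f ▷ T) A).comp (Equiv.bijective _))
end
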